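/- arXiv:2212.10069 — 7 statements merged into one kernel-verified Lean document; each statement's English description precedes it below -/
import Mathlib

section
/- Let f be the infinite Fibonacci sequence. If n ≥ 3 and N ≥ φ(n)+1, then the second difference of the N-factor complexity of f satisfies P_f^{(2)}(n,N) = (n−1) − F_{φ(n)−1} if N+φ(n) is even, and P_f^{(2)}(n,N) = F_{φ(n)−1} if N+φ(n) is odd. -/
/-!
Write `W k = τ^k(0)`. Then `W (k+2) = W (k+1) ++ (W k + 2)` and `|W k| = F_{k+1}`, so that
`f (F_{k+2} + r) = f r + 2` for `r < F_{k+1}`. From this recursion: the letter `0` (resp. `1`) occurs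
only at position `0` (resp. `1`), the letter `2` only at the positions `F_k`, `k ≥ 2`, and
`f (F_k - 1) = k - 1` is the first occurrence of the letter `k - 1`.

Call a starting position `i` *fresh* (for the length `n`) if some Fibonacci number lies in
`(i, i + n - 1]`. The factor at a fresh position determines that position (`eq_of_fresh`), because the
letter preceding a `2` reveals which `F_k` is crossed. The factors at the other positions are
exactly the translates by `2` of arbitrary factors of length `n` (`shift_of_not_fresh`,
`exists_shift`). A fresh factor has all its letters `≤ N` iff `i + n < F_{N+2}` (`fresh_le_iff`). Hence
`P(n, N+2) = P(n, N) + |T(n, N+2)|`, where `T(n, N)` is the set of fresh `i` with `i + n < F_{N+2}`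
(`Pc_add_two`), and `P(n, N) = |T(n, N)|` for `N ≤ φ(n)` (`Pc_base`).

With `p = φ(n)`, that is `F_p < n ≤ F_{p+1}`, the sets `T(n, N)` for `N = p-1, p, p+1` are initial
segments of lengths `F_{p+1} - n`, `F_{p+2} - n`, `F_{p+2}`, and from then on `|T|` grows by `n - 1` at
each step. So the second difference at `N = p + 1` is `F_{p-1}`, and the sum of two consecutive second
differences is `n - 1`.
-/

/-- Number of occurrences of `w` as a contiguous factor of `y`
(number of starting positions `0 ≤ i ≤ |y|-1` where `w` occurs). -/
def occ (w y : List ℕ) : ℕ :=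
  ((List.range y.length).filter (fun i => w.isPrefixOf (y.drop i))).length

/-- Base-`k` representation of `m`, most significant digit first, with `(0)_k = 0`. -/
def rep (k m : ℕ) : List ℕ := if m = 0 then [0] else (Nat.digits k m).reverse

/-- The `(k,w)`-digital sequence: number of occurrences of `w` in `(m)_k`. -/
def dseq (k : ℕ) (w : List ℕ) (m : ℕ) : ℕ := occ w (rep k m)

/-- The set of factors of length `n` of the sequence `a` all of whose letters are `≤ N`. -/
def factorSet (a : ℕ → ℕ) (n N : ℕ) : Set (List ℕ) :=
  { u | (∃ i, u = (List.range n).map fun j => a (i + j)) ∧ ∀ x ∈ u, x ≤ N }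

/-- The `N`-factor complexity `P_a(n,N)`. -/
noncomputable def Pc (a : ℕ → ℕ) (n N : ℕ) : ℕ := Nat.card (factorSet a n N)

/-- `F_a^{(1)}(n,N) = F_a(n,N) \ F_a(n,N-1)`. -/
def factorSet1 (a : ℕ → ℕ) (n N : ℕ) : Set (List ℕ) :=
  factorSet a n N \ factorSet a n (N - 1)

/-- First difference of the `N`-factor complexity in the variable `N`. -/
noncomputable def Pc1 (a : ℕ → ℕ) (n N : ℕ) : ℤ := (Pc a n N : ℤ) - (Pc a n (N - 1) : ℤ)

/-- Second difference of the `N`-factor complexity in the variable `N`. -/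
noncomputable def Pc2 (a : ℕ → ℕ) (n N : ℕ) : ℤ := Pc1 a n N - Pc1 a n (N - 1)

/-- The morphism `τ` on single letters: `τ(2i) = (2i)(2i+1)`, `τ(2i+1) = (2i+2)`. -/
def tauLetter (m : ℕ) : List ℕ := if m % 2 = 0 then [m, m + 1] else [m + 1]

/-- The morphism `τ` extended to finite words by concatenation. -/
def tauWord (u : List ℕ) : List ℕ := u.flatMap tauLetter

/-- Fibonacci numbers with `F_0 = F_1 = 1`. -/
def fibW : ℕ → ℕ
  | 0 => 1
  | 1 => 1
  | n + 2 => fibW (n + 1) + fibW n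

/-- `φ(n) = max {k : F_k < n}`. -/
noncomputable def phi (n : ℕ) : ℕ := sSup {k | fibW k < n}

/-- The infinite Fibonacci sequence `f = τ^∞(0)`: since `τ^{p}(0)` is a prefix of
`τ^{p+1}(0)` and `|τ^{n+1}(0)| = F_{n+2} > n`, the `n`-th letter of the fixed point is
the `n`-th letter of `τ^{n+1}(0)`. -/
def fibSeq (n : ℕ) : ℕ := (tauWord^[n + 1] [0]).getD n 0

/-- The set of factors of length `n` of a finite word `u` all of whose letters are `≤ N`. -/
def factorSetW (u : List ℕ) (n N : ℕ) : Set (List ℕ) :=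
  { v | v.length = n ∧ v <:+: u ∧ ∀ x ∈ v, x ≤ N }

/-! ### Fibonacci numbers -/

theorem fibW_pos (k : ℕ) : 1 ≤ fibW k := by
  induction k using fibW.induct with
  | case1 => simp [fibW]
  | case2 => simp [fibW]
  | case3 n h1 h2 => simp only [fibW]; omega

theorem fibW_add_two (k : ℕ) : fibW (k + 2) = fibW (k + 1) + fibW k := rfl

theorem fibW_add_three (k : ℕ) : fibW (k + 3) = fibW (k + 2) + fibW (k + 1) := rfl

theorem fibW_add_four (k : ℕ) : fibW (k + 4) = fibW (k + 3) + fibW (k + 2) := rfl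

theorem fibW_mono : Monotone fibW := by
  refine monotone_nat_of_le_succ fun k => ?_
  cases k with
  | zero => simp [fibW]
  | succ k => rw [fibW_add_two]; omega

theorem le_fibW (k : ℕ) : k ≤ fibW k := by
  induction k using fibW.induct with
  | case1 => simp [fibW]
  | case2 => simp [fibW]
  | case3 n h1 h2 => have := fibW_pos n; simp only [fibW]; omega

theorem phi_spec (n : ℕ) (hn : 3 ≤ n) :
    fibW (phi n) < n ∧ n ≤ fibW (phi n + 1) ∧ 2 ≤ phi n := by
  have hb : BddAbove {k | fibW k < n} :=
    ⟨n, fun k hk => (le_fibW k).trans (le_of_lt hk)⟩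
  have h2 : 2 ∈ {k | fibW k < n} := by simp [fibW]; omega
  refine ⟨Nat.sSup_mem ⟨2, h2⟩ hb, ?_, le_csSup hb h2⟩
  by_contra h
  have : phi n + 1 ≤ phi n := le_csSup hb (by simpa using h)
  omega

/-- Every positive integer lies in some interval `[F_{k+1}, F_{k+2})`. -/
theorem exists_fibW (m : ℕ) (hm : 1 ≤ m) : ∃ k, fibW (k + 1) ≤ m ∧ m < fibW (k + 2) := by
  have h : ∃ k, m < fibW (k + 2) := ⟨m, by have := le_fibW (m + 2); omega⟩
  refine ⟨Nat.find h, ?_, Nat.find_spec h⟩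
  by_contra hc
  rcases hk : Nat.find h with _ | k
  · rw [hk] at hc; simp [fibW] at hc; omega
  · rw [hk] at hc
    exact Nat.find_min h (m := k) (by omega) (by simpa using hc)

/-! ### The sequence `f` -/

/-- The prefix `τ^k(0)` of `f`. -/
def W (k : ℕ) : List ℕ := tauWord^[k] [0]

theorem tauWord_shift (u : List ℕ) : tauWord (u.map (· + 2)) = (tauWord u).map (· + 2) := by
  induction u with
  | nil => rfl
  | cons a u ih =>
    have h : tauLetter (a + 2) = (tauLetter a).map (· + 2) := by
      unfold tauLetter; rw [Nat.add_mod_right]; split_ifs <;> simp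
    simp only [tauWord, List.map_cons, List.flatMap_cons, List.map_append] at *
    rw [ih, h]

theorem W_succ (k : ℕ) : W (k + 1) = tauWord (W k) := Function.iterate_succ_apply' _ _ _

theorem W_add_two (k : ℕ) : W (k + 2) = W (k + 1) ++ (W k).map (· + 2) := by
  induction k with
  | zero => rfl
  | succ k ih =>
    have h : tauWord (W (k + 1) ++ (W k).map (· + 2)) =
        tauWord (W (k + 1)) ++ tauWord ((W k).map (· + 2)) := by simp [tauWord]
    rw [W_succ (k + 2), ih, h, tauWord_shift, ← W_succ, ← W_succ, ← ih]

theorem W_length (k : ℕ) : (W k).length = fibW (k + 1) := by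
  induction k using Nat.twoStepInduction with
  | zero => rfl
  | one => rfl
  | more k h1 h2 => rw [W_add_two]; simp [h1, h2, fibW_add_two]

theorem W_prefix_succ (k : ℕ) : W k <+: W (k + 1) := by
  cases k with
  | zero => exact ⟨[1], rfl⟩
  | succ k => rw [W_add_two]; exact List.prefix_append _ _

theorem W_prefix {k l : ℕ} (h : k ≤ l) : W k <+: W l := by
  induction l, h using Nat.le_induction with
  | base => exact List.prefix_rfl
  | succ l _ ih => exact ih.trans (W_prefix_succ l)

theorem fibSeq_eq (k m : ℕ) (h : m < fibW (k + 1)) : fibSeq m = (W k).getD m 0 := by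
  have key : ∀ a b : ℕ, a ≤ b → m < fibW (a + 1) → (W a).getD m 0 = (W b).getD m 0 := by
    intro a b hab hm
    obtain ⟨t, ht⟩ := W_prefix hab
    rw [← ht, List.getD_append _ _ _ _ (by rw [W_length]; exact hm)]
  have hm : m < fibW (m + 2) := by have := le_fibW (m + 2); omega
  change (W (m + 1)).getD m 0 = _
  rcases le_total k (m + 1) with hk | hk
  · exact (key _ _ hk h).symm
  · exact key _ _ hk hm

theorem fibSeq_zero : fibSeq 0 = 0 := rfl

theorem fibSeq_one : fibSeq 1 = 1 := rfl

theorem fibSeq_add (k r : ℕ) (h : r < fibW (k + 1)) :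
    fibSeq (fibW (k + 2) + r) = fibSeq r + 2 := by
  rw [fibSeq_eq (k + 2) _ (by rw [fibW_add_three]; omega), fibSeq_eq k r h, W_add_two,
    List.getD_append_right _ _ _ _ (by rw [W_length]; exact Nat.le_add_right _ _), W_length]
  have hl : r < (W k).length := by rw [W_length]; exact h
  rw [Nat.add_sub_cancel_left, List.getD_eq_getElem _ _ (by simpa using hl),
    List.getD_eq_getElem _ _ hl, List.getElem_map]

theorem fibSeq_fib (k : ℕ) : fibSeq (fibW (k + 2)) = 2 :=
  fibSeq_add k 0 (fibW_pos _)

/-- The recursion for `f`, as a decomposition of an arbitrary position. -/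
theorem cases_pos (m : ℕ) : m = 0 ∨ m = 1 ∨
    ∃ k r, m = fibW (k + 2) + r ∧ r < fibW (k + 1) ∧ fibSeq m = fibSeq r + 2 := by
  rcases Nat.eq_zero_or_pos m with h | h
  · exact Or.inl h
  obtain ⟨k, h1, h2⟩ := exists_fibW m h
  cases k with
  | zero => simp [fibW] at h2; omega
  | succ k =>
    rw [show k + 1 + 2 = k + 3 from rfl, fibW_add_three] at h2
    rw [show k + 1 + 1 = k + 2 from rfl] at h1
    have e : m = fibW (k + 2) + (m - fibW (k + 2)) := by omega
    exact Or.inr (Or.inr ⟨k, m - fibW (k + 2), e, by omega, by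
      conv_lhs => rw [e]
      exact fibSeq_add _ _ (by omega)⟩)

theorem fibSeq_eq_zero {m : ℕ} (h : fibSeq m = 0) : m = 0 := by
  rcases cases_pos m with h0 | h0 | ⟨k, r, h1, h2, h3⟩
  · exact h0
  · rw [h0, fibSeq_one] at h; omega
  · omega

theorem fibSeq_eq_two {m : ℕ} (h : fibSeq m = 2) : ∃ k, m = fibW (k + 2) := by
  rcases cases_pos m with h0 | h0 | ⟨k, r, h1, h2, h3⟩
  · rw [h0, fibSeq_zero] at h; omega
  · rw [h0, fibSeq_one] at h; omega
  · have := fibSeq_eq_zero (m := r) (by omega)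
    exact ⟨k, by omega⟩

theorem fibSeq_pred_fib (k : ℕ) : fibSeq (fibW (k + 1) - 1) = k := by
  induction k using Nat.twoStepInduction with
  | zero => rfl
  | one => rfl
  | more k h1 h2 =>
    have := fibW_pos (k + 1)
    rw [show fibW (k + 2 + 1) - 1 = fibW (k + 2) + (fibW (k + 1) - 1) by
      rw [show k + 2 + 1 = k + 3 from rfl, fibW_add_three]; omega, fibSeq_add _ _ (by omega), h1]

theorem fibSeq_le (k : ℕ) : ∀ m, m < fibW (k + 1) → fibSeq m ≤ k := by
  induction k using Nat.twoStepInduction with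
  | zero => intro m hm; simp [fibW] at hm; subst hm; simp [fibSeq_zero]
  | one =>
    intro m hm
    simp only [fibW] at hm
    interval_cases m <;> simp [fibSeq_zero, fibSeq_one]
  | more k h1 h2 =>
    intro m hm
    rw [show k + 2 + 1 = k + 3 from rfl, fibW_add_three] at hm
    rcases lt_or_ge m (fibW (k + 2)) with h | h
    · have := h2 m h; omega
    · have := h1 (m - fibW (k + 2)) (by omega)
      have e := fibSeq_add k (m - fibW (k + 2)) (by omega)
      rw [Nat.add_sub_cancel' h] at e
      omega

/-- The letter `N + 1` does not occur before position `F_{N+2} - 1`, nor does any larger one. -/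
theorem fibSeq_le_of_lt (N : ℕ) : ∀ m, m + 1 < fibW (N + 2) → fibSeq m ≤ N := by
  induction N using Nat.twoStepInduction with
  | zero =>
    intro m hm
    simp only [fibW] at hm
    have : m = 0 := by omega
    subst this; simp [fibSeq_zero]
  | one =>
    intro m hm
    simp only [fibW] at hm
    have : m < 2 := by omega
    interval_cases m <;> simp [fibSeq_zero, fibSeq_one]
  | more N h1 h2 =>
    intro m hm
    rw [show N + 2 + 2 = N + 4 from rfl, fibW_add_four] at hm
    rcases lt_or_ge m (fibW (N + 3)) with h | h
    · exact fibSeq_le _ _ h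
    · have := h1 (m - fibW (N + 3)) (by omega)
      have e := fibSeq_add (N + 1) (m - fibW (N + 3)) (by rw [show N + 1 + 1 = N + 2 from rfl]; omega)
      rw [show N + 1 + 2 = N + 3 from rfl, Nat.add_sub_cancel' h] at e
      omega

/-! ### Fresh positions -/

/-- The factor of length `n` of `f` starting at position `i`. -/
def fac (n i : ℕ) : List ℕ := (List.range n).map fun j => fibSeq (i + j)

/-- The position `i` is fresh for the length `n` if the factor of length `n` starting at `i` has a
position `F_{k+1}` other than its first one. -/
def Fresh (n i : ℕ) : Prop := ∃ k, i < fibW (k + 1) ∧ fibW (k + 1) < i + n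

theorem fac_eq_iff (n i i' : ℕ) :
    fac n i = fac n i' ↔ ∀ j < n, fibSeq (i + j) = fibSeq (i' + j) := by
  simp [fac, List.map_inj_left]

theorem fac_shift_iff (n i j : ℕ) :
    fac n i = (fac n j).map (· + 2) ↔ ∀ l < n, fibSeq (i + l) = fibSeq (j + l) + 2 := by
  simp [fac, List.map_inj_left]

theorem fac_le_iff (n i N : ℕ) :
    (∀ x ∈ fac n i, x ≤ N) ↔ ∀ j < n, fibSeq (i + j) ≤ N := by
  simp [fac]

theorem mem_factorSet (n N : ℕ) (u : List ℕ) :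
    u ∈ factorSet fibSeq n N ↔ (∃ i, u = fac n i) ∧ ∀ x ∈ u, x ≤ N := Iff.rfl

/-- A factor at a fresh position occurs nowhere else. -/
theorem eq_of_fresh {n i i' : ℕ} (h : Fresh n i) (he : fac n i = fac n i') : i = i' := by
  rw [fac_eq_iff] at he
  obtain ⟨k, h1, h2⟩ := h
  cases k with
  | zero =>
    simp only [fibW] at h1 h2
    have hi : i = 0 := by omega
    have h0 := he 0 (by omega)
    rw [hi] at h0
    have := fibSeq_eq_zero (m := i') (by simpa [fibSeq_zero] using h0.symm)
    omega
  | succ k =>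
    rw [show k + 1 + 1 = k + 2 from rfl] at h1 h2
    have e1 := he (fibW (k + 2) - i) (by omega)
    have e2 := he (fibW (k + 2) - i - 1) (by omega)
    rw [show i + (fibW (k + 2) - i) = fibW (k + 2) by omega, fibSeq_fib] at e1
    obtain ⟨l, hl⟩ := fibSeq_eq_two e1.symm
    rw [show i + (fibW (k + 2) - i - 1) = fibW (k + 2) - 1 by omega,
      show i' + (fibW (k + 2) - i - 1) = fibW (l + 2) - 1 by omega,
      fibSeq_pred_fib, fibSeq_pred_fib] at e2
    have : k = l := by omega
    subst this
    omega

theorem shift_of_not_fresh {n i : ℕ} (hn : 3 ≤ n) (h : ¬ Fresh n i) :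
    ∃ j < i, fac n i = (fac n j).map (· + 2) := by
  have hF : ∀ k, i < fibW (k + 1) → i + n ≤ fibW (k + 1) := by
    intro k hk
    by_contra hc
    exact h ⟨k, hk, by omega⟩
  have a0 := hF 0
  have a1 := hF 1
  simp only [fibW] at a0 a1
  obtain ⟨k, h1, h2⟩ := exists_fibW i (by omega)
  cases k with
  | zero => simp [fibW] at h2; omega
  | succ k =>
    have hb := hF _ h2
    rw [show k + 1 + 1 + 1 = k + 3 from rfl, fibW_add_three] at hb
    rw [show k + 1 + 1 = k + 2 from rfl] at h1
    have hp := fibW_pos (k + 2)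
    refine ⟨i - fibW (k + 2), by omega, (fac_shift_iff _ _ _).2 fun l hl => ?_⟩
    rw [← fibSeq_add k _ (by omega)]
    congr 1
    omega

theorem exists_shift (n j : ℕ) : ∃ i, ¬ Fresh n i ∧ fac n i = (fac n j).map (· + 2) := by
  -- any `k` with `j + n ≤ F_{k+1}` works, since then the factor at `F_{k+2} + j` ends before `F_{k+3}`
  have hk := le_fibW (j + n + 1)
  refine ⟨fibW (j + n + 2) + j, ?_, (fac_shift_iff _ _ _).2 fun l hl => ?_⟩
  · rintro ⟨k, h1, h2⟩
    have e := fibW_add_two (j + n + 1)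
    rcases le_or_gt k (j + n + 1) with h | h
    · have := fibW_mono (show k + 1 ≤ j + n + 2 by omega)
      omega
    · have := fibW_mono (show j + n + 1 + 2 ≤ k + 1 by omega)
      rw [e] at this
      rw [show j + n + 1 + 1 = j + n + 2 by omega] at this
      omega
  · rw [← fibSeq_add (j + n) _ (by omega)]
    congr 1
    omega

theorem fresh_le_iff {n i N : ℕ} (h : Fresh n i) :
    (∀ x ∈ fac n i, x ≤ N) ↔ i + n < fibW (N + 2) := by
  rw [fac_le_iff]
  constructor
  · intro hle
    by_contra hc
    rcases lt_or_ge i (fibW (N + 2)) with h1 | h1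
    · have := hle (fibW (N + 2) - 1 - i) (by omega)
      rw [show i + (fibW (N + 2) - 1 - i) = fibW (N + 2) - 1 by omega, fibSeq_pred_fib] at this
      omega
    · obtain ⟨k, h2, h3⟩ := h
      have := hle (fibW (k + 1) - 1 - i) (by omega)
      rw [show i + (fibW (k + 1) - 1 - i) = fibW (k + 1) - 1 by omega, fibSeq_pred_fib] at this
      have := fibW_mono (show k + 1 ≤ N + 2 by omega)
      omega
  · intro hlt j hj
    exact fibSeq_le_of_lt N _ (by omega)

/-- Every factor of length `n ≥ F_{N+2}` has a letter greater than `N`. -/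
theorem exists_big {n N : ℕ} (hn : 3 ≤ n) (hN : fibW (N + 2) ≤ n) (i : ℕ) :
    ¬ ∀ x ∈ fac n i, x ≤ N := by
  induction i using Nat.strong_induction_on with
  | _ i ih =>
    intro hle
    by_cases h : Fresh n i
    · have := (fresh_le_iff h).1 hle
      omega
    · obtain ⟨j, hj, e⟩ := shift_of_not_fresh hn h
      refine ih j hj fun x hx => ?_
      have := hle (x + 2) (by rw [e]; exact List.mem_map_of_mem hx)
      omega

/-! ### Counting factors -/

open Classical in
/-- The fresh positions `i` whose factor of length `n` has all its letters `≤ N`; the latter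
condition is encoded as `i + n < F_{N+2}`, which is equivalent by `fresh_le_iff`. -/
noncomputable def T (n N : ℕ) : Finset ℕ :=
  (Finset.range (fibW (N + 2))).filter fun i => Fresh n i ∧ i + n < fibW (N + 2)

theorem mem_T {n N i : ℕ} : i ∈ T n N ↔ Fresh n i ∧ i + n < fibW (N + 2) := by
  simp only [T, Finset.mem_filter, Finset.mem_range]
  exact ⟨fun h => h.2, fun h => ⟨by omega, h⟩⟩

theorem factorSet_finite (n N : ℕ) : (factorSet fibSeq n N).Finite := by
  refine ((List.finite_length_eq (Fin (N + 1)) n).image (List.map Fin.val)).subset ?_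
  rintro u ⟨⟨i, rfl⟩, hu⟩
  refine ⟨(List.range n).map fun j => Fin.ofNat (N + 1) (fibSeq (i + j)), by simp, ?_⟩
  rw [List.map_map, List.map_inj_left]
  intro j hj
  have := hu (fibSeq (i + j)) (List.mem_map_of_mem (f := fun j => fibSeq (i + j)) hj)
  simp only [Function.comp, Fin.val_ofNat]
  exact Nat.mod_eq_of_lt (by omega)

theorem ncard_fac_T (n N : ℕ) : (fac n '' (T n N : Set ℕ)).ncard = (T n N).card := by
  rw [Set.InjOn.ncard_image (fun i hi i' _ h => eq_of_fresh (mem_T.1 hi).1 h),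
    Set.ncard_coe_finset]

theorem Pc_add_two {n : ℕ} (hn : 3 ≤ n) (N : ℕ) :
    Pc fibSeq n (N + 2) = Pc fibSeq n N + (T n (N + 2)).card := by
  have hset : factorSet fibSeq n (N + 2) =
      List.map (· + 2) '' factorSet fibSeq n N ∪ fac n '' (T n (N + 2) : Set ℕ) := by
    ext u
    constructor
    · rintro ⟨⟨i, rfl⟩, hu⟩
      by_cases h : Fresh n i
      · exact Or.inr ⟨i, mem_T.2 ⟨h, (fresh_le_iff h).1 hu⟩, rfl⟩
      · obtain ⟨j, -, e⟩ := shift_of_not_fresh hn h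
        refine Or.inl ⟨fac n j, ⟨⟨j, rfl⟩, fun x hx => ?_⟩, e.symm⟩
        have := hu (x + 2) (by change x + 2 ∈ fac n i; rw [e]; exact List.mem_map_of_mem hx)
        omega
    · rintro (⟨v, ⟨⟨j, rfl⟩, hv⟩, rfl⟩ | ⟨i, hi, rfl⟩)
      · obtain ⟨i, -, e⟩ := exists_shift n j
        refine ⟨⟨i, e.symm⟩, fun x hx => ?_⟩
        obtain ⟨y, hy, rfl⟩ := List.mem_map.1 hx
        exact Nat.add_le_add_right (hv y hy) 2
      · have := mem_T.1 hi
        exact ⟨⟨i, rfl⟩, (fresh_le_iff this.1).2 this.2⟩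
  have hdisj : Disjoint (List.map (· + 2) '' factorSet fibSeq n N)
      (fac n '' (T n (N + 2) : Set ℕ)) := by
    rw [Set.disjoint_left]
    rintro u ⟨v, ⟨⟨j, rfl⟩, -⟩, rfl⟩ ⟨i', hi', e'⟩
    obtain ⟨i, hi, e⟩ := exists_shift n j
    have hf := (mem_T.1 hi').1
    exact hi (eq_of_fresh hf (e'.trans e.symm) ▸ hf)
  change (factorSet fibSeq n (N + 2)).ncard = (factorSet fibSeq n N).ncard + _
  rw [hset, Set.ncard_union_eq hdisj ((factorSet_finite n N).image _)
    ((T n (N + 2)).finite_toSet.image _), ncard_fac_T, Set.ncard_image_of_injective]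
  exact List.map_injective_iff.2 (add_left_injective 2)

theorem Pc_base {n N q : ℕ} (hn : 3 ≤ n) (hq : fibW (q + 2) ≤ n) (hN : N ≤ q + 2) :
    Pc fibSeq n N = (T n N).card := by
  rw [← ncard_fac_T]
  change (factorSet fibSeq n N).ncard = _
  congr 1
  ext u
  constructor
  · rintro ⟨⟨i, rfl⟩, hu⟩
    by_cases h : Fresh n i
    · exact ⟨i, mem_T.2 ⟨h, (fresh_le_iff h).1 hu⟩, rfl⟩
    · obtain ⟨j, -, e⟩ := shift_of_not_fresh hn h
      refine absurd (fun x hx => ?_) (exists_big hn hq j)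
      have := hu (x + 2) (by change x + 2 ∈ fac n i; rw [e]; exact List.mem_map_of_mem hx)
      omega
  · rintro ⟨i, hi, rfl⟩
    have := mem_T.1 hi
    exact ⟨⟨i, rfl⟩, (fresh_le_iff this.1).2 this.2⟩

/-! ### The sizes of the sets `T`

Throughout, `q + 2` plays the role of `φ(n)`. -/

theorem T_card_one {n q : ℕ} (h1 : fibW (q + 2) < n) :
    (T n (q + 1)).card = fibW (q + 3) - n := by
  have : T n (q + 1) = Finset.range (fibW (q + 3) - n) := by
    ext i
    rw [mem_T, Finset.mem_range]
    have e := fibW_add_two (q + 1)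
    have e' := fibW_mono (show q + 1 ≤ q + 2 by omega)
    constructor
    · rintro ⟨-, h⟩; rw [show q + 1 + 2 = q + 3 from rfl] at h; omega
    · intro h
      rw [show q + 1 + 2 = q + 3 from rfl, show q + 1 + 1 = q + 2 from rfl] at *
      exact ⟨⟨q + 1, by rw [show q + 1 + 1 = q + 2 from rfl]; omega,
        by rw [show q + 1 + 1 = q + 2 from rfl]; omega⟩, by omega⟩
  rw [this, Finset.card_range]

/-- If `n > F_{q+2}`, every position below `F_{q+4}` is fresh. -/
theorem fresh_of_lt {n q i : ℕ} (h1 : fibW (q + 2) < n)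
    (hi : i < fibW (q + 4)) : Fresh n i := by
  have e : fibW (q + 4) = fibW (q + 3) + fibW (q + 2) := rfl
  have e' : fibW (q + 3) = fibW (q + 2) + fibW (q + 1) := rfl
  have e'' := fibW_mono (show q + 1 ≤ q + 2 by omega)
  rcases lt_or_ge (fibW (q + 4)) (i + n) with h | h
  · exact ⟨q + 3, hi, h⟩
  rcases lt_or_ge (fibW (q + 3)) (i + n) with h' | h'
  · exact ⟨q + 2, by change i < fibW (q + 3); omega, h'⟩
  · exact ⟨q + 1, by change i < fibW (q + 2); omega, by change fibW (q + 2) < i + n; omega⟩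

theorem T_card_two {n q : ℕ} (h1 : fibW (q + 2) < n) :
    (T n (q + 2)).card = fibW (q + 4) - n := by
  have : T n (q + 2) = Finset.range (fibW (q + 4) - n) := by
    ext i
    rw [mem_T, Finset.mem_range, show q + 2 + 2 = q + 4 from rfl]
    constructor
    · rintro ⟨-, h⟩; omega
    · intro h
      exact ⟨fresh_of_lt h1 (by omega), by omega⟩
  rw [this, Finset.card_range]

theorem T_card_three {n q : ℕ} (h1 : fibW (q + 2) < n) (h2 : n ≤ fibW (q + 3)) :
    (T n (q + 3)).card = fibW (q + 4) := by
  have : T n (q + 3) = Finset.range (fibW (q + 4)) := by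
    ext i
    rw [mem_T, Finset.mem_range]
    have e : fibW (q + 3 + 2) = fibW (q + 4) + fibW (q + 3) := rfl
    constructor
    · rintro ⟨⟨k, h3, h4⟩, h⟩
      have : k + 1 < q + 3 + 2 := by
        by_contra hc
        have := fibW_mono (show q + 3 + 2 ≤ k + 1 by omega)
        omega
      have := fibW_mono (show k + 1 ≤ q + 4 by omega)
      omega
    · intro h
      exact ⟨fresh_of_lt h1 h, by omega⟩
  rw [this, Finset.card_range]

theorem T_card_succ {n N : ℕ} (hn : 3 ≤ n) (h : n ≤ fibW N) :
    (T n (N + 1)).card = (T n N).card + (n - 1) := by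
  have e : fibW (N + 2) = fibW (N + 1) + fibW N := rfl
  have e' : fibW (N + 3) = fibW (N + 2) + fibW (N + 1) := rfl
  have hm := fibW_mono (show N ≤ N + 1 by omega)
  have : T n (N + 1) = T n N ∪ Finset.Ico (fibW (N + 2) - n + 1) (fibW (N + 2)) := by
    ext i
    rw [Finset.mem_union, mem_T, mem_T, Finset.mem_Ico, show N + 1 + 2 = N + 3 from rfl]
    constructor
    · rintro ⟨hF, hi⟩
      rcases lt_or_ge (i + n) (fibW (N + 2)) with h' | h'
      · exact Or.inl ⟨hF, h'⟩
      · obtain ⟨k, h3, h4⟩ := hF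
        right
        have hk : k + 1 < N + 3 := by
          by_contra hc
          have := fibW_mono (show N + 3 ≤ k + 1 by omega)
          omega
        have hk2 := fibW_mono (show k + 1 ≤ N + 2 by omega)
        -- if `i + n = F_{N+2}`, then `i ≥ F_{N+1}`, which leaves no room for a Fibonacci number
        rcases le_or_gt (k + 1) (N + 1) with hk3 | hk3
        · have := fibW_mono hk3
          omega
        · have : k + 1 = N + 2 := by omega
          rw [this] at h3 h4
          omega
    · rintro (⟨hF, hi⟩ | ⟨h3, h4⟩)
      · exact ⟨hF, by omega⟩
      · exact ⟨⟨N + 1, h4, by change fibW (N + 2) < i + n; omega⟩, by omega⟩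
  rw [this, Finset.card_union_of_disjoint, Nat.card_Ico]
  · omega
  · rw [Finset.disjoint_left]
    intro i hi hi'
    have := (mem_T.1 hi).2
    have := (Finset.mem_Ico.1 hi').1
    omega

/-! ### The second difference -/

theorem Pc2_add_two (a : ℕ → ℕ) (n N : ℕ) :
    Pc2 a n (N + 2) = Pc a n (N + 2) - 2 * Pc a n (N + 1) + Pc a n N := by
  simp only [Pc2, Pc1, show N + 2 - 1 = N + 1 by omega, show N + 1 - 1 = N by omega]
  ring

theorem Pc2_base {n q : ℕ} (hn : 3 ≤ n) (h1 : fibW (q + 2) < n) (h2 : n ≤ fibW (q + 3)) :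
    Pc2 fibSeq n (q + 3) = fibW (q + 1) := by
  have e : fibW (q + 4) = fibW (q + 3) + fibW (q + 2) := rfl
  have e' : fibW (q + 3) = fibW (q + 2) + fibW (q + 1) := rfl
  have a := Pc_base hn h1.le (N := q + 1) (by omega)
  have b := Pc_base hn h1.le (N := q + 2) (by omega)
  have c := Pc_add_two hn (q + 1)
  rw [T_card_one h1] at a
  rw [T_card_two h1] at b
  rw [show q + 1 + 2 = q + 3 from rfl, T_card_three h1 h2] at c
  have := Pc2_add_two fibSeq n (q + 1)
  rw [show q + 1 + 2 = q + 3 from rfl, show q + 1 + 1 = q + 2 from rfl] at this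
  omega

theorem Pc2_succ {n N : ℕ} (hn : 3 ≤ n) (h : n ≤ fibW (N + 2)) :
    Pc2 fibSeq n (N + 3) + Pc2 fibSeq n (N + 2) = n - 1 := by
  have a := Pc_add_two hn N
  have b := Pc_add_two hn (N + 1)
  have c := T_card_succ hn h
  have d := Pc2_add_two fibSeq n N
  have d' := Pc2_add_two fibSeq n (N + 1)
  rw [show N + 1 + 2 = N + 3 from rfl] at *
  rw [show N + 2 + 1 = N + 3 from rfl] at c
  rw [show N + 1 + 1 = N + 2 from rfl] at d'
  omega

theorem stmt5 (n N : ℕ) (hn : 3 ≤ n) (hN : phi n + 1 ≤ N) :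
    (Even (N + phi n) → Pc2 fibSeq n N = (n : ℤ) - 1 - (fibW (phi n - 1) : ℤ)) ∧
    (Odd (N + phi n) → Pc2 fibSeq n N = (fibW (phi n - 1) : ℤ)) := by
  obtain ⟨h1, h2, h3⟩ := phi_spec n hn
  obtain ⟨q, hq⟩ : ∃ q, phi n = q + 2 := ⟨phi n - 2, by omega⟩
  rw [hq] at h1 h2 hN ⊢
  rw [show q + 2 - 1 = q + 1 from rfl]
  rw [show q + 2 + 1 = q + 3 from rfl] at h2 hN
  induction N, hN using Nat.le_induction with
  | base =>
    refine ⟨fun h => ?_, fun _ => Pc2_base hn h1 h2⟩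
    rw [Nat.even_iff] at h
    omega
  | succ N hN ih =>
    obtain ⟨M, rfl⟩ : ∃ M, N = M + 2 := ⟨N - 2, by omega⟩
    have hs := Pc2_succ hn (h2.trans (fibW_mono hN))
    rw [show M + 2 + 1 = M + 3 from rfl]
    constructor
    · intro h
      have := ih.2 (by rw [Nat.odd_iff]; rw [Nat.even_iff] at h; omega)
      omega
    · intro h
      have := ih.1 (by rw [Nat.even_iff]; rw [Nat.odd_iff] at h; omega)
      omega
end

section
/- Let p, q ≥ 0 be integers with q even, and let u = u_0 u_1 ⋯ u_{|u|−1} be the word τ^p(q). Then |u| = F_{p+1}, u_0 = q, u_{F_{p+1}−1} = p+q, and q+1 ≤ u_i ≤ p+q−1 for all 1 ≤ i ≤ F_{p+1}−2. -/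
theorem tauWord_append (u v : List ℕ) : tauWord (u ++ v) = tauWord u ++ tauWord v := by
  simp [tauWord]

theorem tauWord_iterate_append (p : ℕ) (u v : List ℕ) :
    tauWord^[p] (u ++ v) = tauWord^[p] u ++ tauWord^[p] v := by
  induction p generalizing u v with
  | zero => rfl
  | succ p ih => simp only [Function.iterate_succ_apply, tauWord_append, ih]

theorem tauWord_even {q : ℕ} (hq : Even q) : tauWord [q] = [q] ++ [q + 1] := by
  simp [tauWord, tauLetter, Nat.even_iff.mp hq]

theorem tauWord_even_succ {q : ℕ} (hq : Even q) : tauWord [q + 1] = [q + 2] := by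
  have h : (q + 1) % 2 = 1 := by have := Nat.even_iff.mp hq; omega
  simp [tauWord, tauLetter, h]

theorem tauWord_iterate_add_two (p : ℕ) {q : ℕ} (hq : Even q) :
    tauWord^[p + 2] [q] = tauWord^[p + 1] [q] ++ tauWord^[p] [q + 2] := by
  rw [Function.iterate_succ_apply, tauWord_even hq, tauWord_iterate_append,
    Function.iterate_succ_apply _ _ [q + 1], tauWord_even_succ hq]

/-- For `p ≥ 1` (here `p + 1`), `τ^p(q)` is `q m (p+q)` with every letter of the middle block `m`
strictly between `q` and `p + q`, and its length is `F_{p+1}`. -/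
theorem tauWord_iterate_shape (p : ℕ) : ∀ q : ℕ, Even q →
    ∃ m : List ℕ, tauWord^[p + 1] [q] = q :: (m ++ [p + 1 + q]) ∧
      m.length + 2 = fibW (p + 2) ∧ ∀ x ∈ m, q + 1 ≤ x ∧ x ≤ p + q := by
  induction p using Nat.twoStepInduction with
  | zero =>
    intro q hq
    exact ⟨[], by simp [tauWord_even hq, Nat.add_comm], rfl, by simp⟩
  | one =>
    intro q hq
    refine ⟨[q + 1], ?_, rfl, by simp [Nat.add_comm]⟩
    rw [tauWord_iterate_add_two 0 hq]
    simp [tauWord_even hq, Nat.add_comm]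
  | more p ih₀ ih₁ =>
    intro q hq
    obtain ⟨m₁, h₁, l₁, b₁⟩ := ih₁ q hq
    obtain ⟨m₀, h₀, l₀, b₀⟩ := ih₀ (q + 2) (hq.add even_two)
    refine ⟨m₁ ++ [p + 1 + 1 + q] ++ (q + 2) :: m₀, ?_, ?_, ?_⟩
    · rw [tauWord_iterate_add_two (p + 1) hq, h₁, h₀]
      simp
      omega
    · have hF : fibW (p + 2 + 2) = fibW (p + 1 + 2) + fibW (p + 2) := rfl
      simp
      omega
    · intro x hx
      simp only [List.mem_append, List.mem_cons, List.not_mem_nil, or_false] at hx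
      rcases hx with (hx | rfl) | rfl | hx
      · have := b₁ x hx; omega
      · omega
      · omega
      · have := b₀ x hx; omega

theorem stmt6 (p q : ℕ) (hq : Even q) :
    (tauWord^[p] [q]).length = fibW (p + 1) ∧
    (tauWord^[p] [q]).getD 0 0 = q ∧
    (tauWord^[p] [q]).getD (fibW (p + 1) - 1) 0 = p + q ∧
    (∀ i, 1 ≤ i → i ≤ fibW (p + 1) - 2 →
      q + 1 ≤ (tauWord^[p] [q]).getD i 0 ∧ (tauWord^[p] [q]).getD i 0 ≤ p + q - 1) := by
  cases p with
  | zero =>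
    refine ⟨rfl, rfl, by simp [fibW], ?_⟩
    intro i h₁ h₂
    simp [fibW] at h₂
    omega
  | succ p =>
    obtain ⟨m, h, l, b⟩ := tauWord_iterate_shape p q hq
    have l' : fibW (p + 1 + 1) = m.length + 2 := l.symm
    rw [h, l']
    refine ⟨by simp, by simp, by simp, ?_⟩
    intro i h₁ h₂
    obtain ⟨j, rfl⟩ : ∃ j, i = j + 1 := ⟨i - 1, by omega⟩
    have hj : j < m.length := by omega
    have e : (q :: (m ++ [p + 1 + q])).getD (j + 1) 0 = m[j] := by
      simp [List.getD, List.getElem?_append_left hj, hj]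
    rw [e]
    have := b m[j] (List.getElem_mem hj)
    omega
end

section
/- Let k = 2 and w = 1, let s = s_{2,1}, let n ≥ 1, and let u be a word of length n all of whose letters are positive integers. Then for all N ≥ ⌈log_2(n)⌉ + 2: u ∈ F_s^{(1)}(n,N) if and only if u + 1̄ ∈ F_s^{(1)}(n,N+1), where u + 1̄ denotes the word obtained from u by adding 1 to every letter. -/
lemma occ_singleton (y : List ℕ) : occ [1] y = y.count 1 := by
  induction y with
  | nil => simp [occ]
  | cons a y ih =>
    have h : occ [1] (a :: y) = (if a = 1 then 1 else 0) + occ [1] y := by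
      unfold occ
      rw [List.length_cons, List.range_succ_eq_map, List.filter_cons, List.filter_map]
      by_cases h : a = 1
      · subst h
        simp [Function.comp_def, Nat.add_comm]
      · have hne : ¬ (1 = a) := fun e => h e.symm
        simp [Function.comp_def, h, hne]
    rw [h, ih, List.count_cons]
    simp [Nat.add_comm]

lemma dseq_eq_count (m : ℕ) : dseq 2 [1] m = (Nat.digits 2 m).count 1 := by
  unfold dseq rep
  rw [occ_singleton]
  split_ifs with h
  · simp [h]
  · simp

lemma dseq_bit (b m : ℕ) (hb : b < 2) : dseq 2 [1] (b + 2 * m) = b + dseq 2 [1] m := by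
  simp only [dseq_eq_count]
  by_cases h : b = 0 ∧ m = 0
  · simp [h.1, h.2]
  · rw [Nat.digits_add 2 (by norm_num) b m hb (by omega)]
    interval_cases b <;> simp [Nat.add_comm]

/-- Putting a new leading `1` in front of the binary representation adds one to the digit count. -/
lemma dseq_two_pow_add (M c : ℕ) (hc : c < 2 ^ M) :
    dseq 2 [1] (2 ^ M + c) = dseq 2 [1] c + 1 := by
  induction M generalizing c with
  | zero =>
    obtain rfl : c = 0 := by simpa using hc
    simp [dseq_eq_count]
  | succ M ih =>
    rw [pow_succ] at hc
    have h1 : 2 ^ (M + 1) + c = c % 2 + 2 * (2 ^ M + c / 2) := by rw [pow_succ]; omega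
    have h2 : dseq 2 [1] c = c % 2 + dseq 2 [1] (c / 2) := by
      rw [← dseq_bit _ _ (Nat.mod_lt _ (by norm_num))]
      congr 1
      omega
    rw [h1, dseq_bit _ _ (Nat.mod_lt _ (by norm_num)), ih _ (by omega), h2]
    omega

/-- For positive `u`, the word `u` is a factor exactly when `u + 1` is. -/
lemma factor_shift_iff (n : ℕ) (hn : 1 ≤ n) (u : List ℕ) (hpos : ∀ x ∈ u, 1 ≤ x) :
    (∃ i, u = (List.range n).map fun j => dseq 2 [1] (i + j)) ↔
      ∃ i, u.map (· + 1) = (List.range n).map fun j => dseq 2 [1] (i + j) := by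
  constructor
  · rintro ⟨i, rfl⟩
    refine ⟨2 ^ (i + n) + i, ?_⟩
    rw [List.map_map]
    refine List.map_congr_left fun j hj => ?_
    have hjn := List.mem_range.mp hj
    have := Nat.lt_two_pow_self (n := i + n)
    rw [Nat.add_assoc, dseq_two_pow_add _ _ (by omega)]
    rfl
  · rintro ⟨i, hi⟩
    have hge : ∀ j < n, 2 ≤ dseq 2 [1] (i + j) := by
      intro j hj
      have hm : dseq 2 [1] (i + j) ∈ u.map (· + 1) := by
        rw [hi]
        exact List.mem_map.mpr ⟨j, List.mem_range.mpr hj, rfl⟩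
      obtain ⟨x, hx, hxe⟩ := List.mem_map.mp hm
      have := hpos x hx
      omega
    have hi0 : i ≠ 0 := by
      rintro rfl
      have := hge 0 (by omega)
      simp [dseq_eq_count] at this
    set M := Nat.log 2 i
    have hlo : 2 ^ M ≤ i := Nat.pow_log_le_self 2 hi0
    have hhi : i < 2 ^ (M + 1) := Nat.lt_pow_succ_log_self (by norm_num) i
    have hend : i + n ≤ 2 ^ (M + 1) := by
      by_contra! hlt
      have h := hge (2 ^ (M + 1) - i) (by omega)
      have h0 := dseq_two_pow_add (M + 1) 0 (by positivity)
      rw [Nat.add_sub_cancel' hhi.le] at h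
      simp only [Nat.add_zero] at h0
      have h00 : dseq 2 [1] 0 = 0 := by simp [dseq_eq_count]
      omega
    rw [pow_succ] at hend
    refine ⟨i - 2 ^ M, List.map_injective_iff.mpr (add_left_injective 1) ?_⟩
    rw [hi, List.map_map]
    refine List.map_congr_left fun j hj => ?_
    have hjn := List.mem_range.mp hj
    have e : i + j = 2 ^ M + (i - 2 ^ M + j) := by omega
    rw [e, dseq_two_pow_add _ _ (by omega)]
    rfl

theorem stmt8 (n : ℕ) (hn : 1 ≤ n) (u : List ℕ) (hu : u.length = n)
    (hpos : ∀ x ∈ u, 1 ≤ x) (N : ℕ) (hN : Nat.clog 2 n + 2 ≤ N) :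
    u ∈ factorSet1 (dseq 2 [1]) n N ↔
      u.map (· + 1) ∈ factorSet1 (dseq 2 [1]) n (N + 1) := by
  have key : ∀ K, u ∈ factorSet (dseq 2 [1]) n K ↔
      u.map (· + 1) ∈ factorSet (dseq 2 [1]) n (K + 1) := by
    intro K
    simp only [factorSet, Set.mem_ofPred_eq]
    rw [factor_shift_iff n hn u hpos]
    simp
  -- `N` is positive, so the truncated differences satisfy `N - 1 + 1 = N + 1 - 1`.
  have e : N + 1 - 1 = N - 1 + 1 := by omega
  simp only [factorSet1, Set.mem_sdiff]
  rw [e, ← key, ← key]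
end

section
/- Let k ≥ 2 and let w be a nonempty word over Σ_k with (k,w) ≠ (2,1), and let s = s_{k,w}. Let n ≥ 1 and let u be a word of length n over ℕ. Then for all N ≥ ⌈log_k(n)⌉ + 1: u ∈ F_s^{(1)}(n,N) if and only if u + 1̄ ∈ F_s^{(1)}(n,N+1), where u + 1̄ denotes the word obtained from u by adding 1 to every letter. -/
/-- The digit of `m` of weight `k ^ j`. -/
def dg (k m j : ℕ) : ℕ := m / k ^ j % k

/-- The pattern `W 0, …, W (ℓ - 1)`, least significant letter first, occurs in the base-`k`
expansion of `m` (extended by infinitely many leading zeros) with its last letter at weight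
`k ^ j`. -/
def Occ (k ℓ : ℕ) (W : ℕ → ℕ) (m j : ℕ) : Prop := ∀ t < ℓ, dg k m (j + t) = W t

open Classical in
/-- Number of occurrences of the pattern `W` of length `ℓ` in the word of length `T` formed by the
`T` lowest base-`k` digits of `m`, leading zeros included. -/
noncomputable def cnt (k ℓ : ℕ) (W : ℕ → ℕ) (T m : ℕ) : ℕ :=
  ((Finset.range (T + 1 - ℓ)).filter (fun j => Occ k ℓ W m j)).card

/-- The letters of `w` read from the right. -/
def pat (w : List ℕ) (t : ℕ) : ℕ := w.reverse.getD t 0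

/-- The length of the base-`k` representation; it is `1` for `m = 0`. -/
def len (k m : ℕ) : ℕ := (rep k m).length

/-! ### Digits -/

lemma dg_lt {k : ℕ} (hk : 2 ≤ k) (m j : ℕ) : dg k m j < k := Nat.mod_lt _ (by omega)

lemma dg_low {k : ℕ} (hk : 2 ≤ k) (X m : ℕ) {T j : ℕ} (hj : j < T) :
    dg k (X * k ^ T + m) j = dg k m j := by
  obtain ⟨s, rfl⟩ : ∃ s, T = j + 1 + s := ⟨T - (j + 1), by omega⟩
  unfold dg
  have h : X * k ^ (j + 1 + s) + m = m + k ^ j * (k * (X * k ^ s)) := by ring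
  rw [h, Nat.add_mul_div_left _ _ (by positivity), Nat.add_mul_mod_self_left]

lemma dg_high {k : ℕ} (hk : 2 ≤ k) (X : ℕ) {m T : ℕ} (j : ℕ) (hm : m < k ^ T) :
    dg k (X * k ^ T + m) (T + j) = dg k X j := by
  unfold dg
  rw [pow_add, ← Nat.div_div_eq_div_mul, mul_comm X, Nat.mul_add_div (by positivity),
    Nat.div_eq_of_lt hm, add_zero]

lemma dg_zero_of_lt {k m j : ℕ} (hm : m < k ^ j) : dg k m j = 0 := by
  simp [dg, Nat.div_eq_of_lt hm]

lemma dg_congr {k : ℕ} (hk : 2 ≤ k) {m m' T j : ℕ} (h : m % k ^ T = m' % k ^ T) (hj : j < T) :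
    dg k m j = dg k m' j := by
  rw [← Nat.div_add_mod' m (k ^ T), ← Nat.div_add_mod' m' (k ^ T), dg_low hk _ _ hj,
    dg_low hk _ _ hj, h]

lemma dg_congr_div {k m m' j0 j : ℕ} (h : m / k ^ j0 = m' / k ^ j0) (hj : j0 ≤ j) :
    dg k m j = dg k m' j := by
  obtain ⟨s, rfl⟩ := Nat.exists_eq_add_of_le hj
  unfold dg
  rw [pow_add, ← Nat.div_div_eq_div_mul, ← Nat.div_div_eq_div_mul, h]

lemma dg_pow_sub_one {k : ℕ} (hk : 2 ≤ k) {s j : ℕ} (hj : j < s) : dg k (k ^ s - 1) j = k - 1 := by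
  obtain ⟨r, rfl⟩ : ∃ r, s = j + 1 + r := ⟨s - (j + 1), by omega⟩
  have h1 : 0 < k ^ r := by positivity
  have h2 : 0 < k ^ j := by positivity
  obtain ⟨a, ha⟩ := Nat.exists_eq_add_of_le' h1
  obtain ⟨b, hb⟩ := Nat.exists_eq_add_of_le' h2
  obtain ⟨c, rfl⟩ := Nat.exists_eq_add_of_le' hk
  have h : (c + 2) ^ (j + 1 + r) - 1 = (c + 2) ^ j * (a * (c + 2) + (c + 1)) + b := by
    rw [pow_add, pow_add, ha, hb]
    apply Nat.sub_eq_of_eq_add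
    ring
  unfold dg
  rw [h, Nat.mul_add_div h2, Nat.div_eq_of_lt (a := b) (by omega), add_zero, add_comm,
    Nat.add_mul_mod_self_right, Nat.mod_eq_of_lt (by omega)]
  omega

/-- Digits of a number slightly above the multiple `Q * k ^ t`. -/
lemma dg_hi {k : ℕ} (hk : 2 ≤ k) {L t Q m : ℕ} (hLt : L ≤ t) (h1 : Q * k ^ t ≤ m)
    (h2 : m < Q * k ^ t + k ^ L) :
    (∀ j, L ≤ j → j < t → dg k m j = 0) ∧ m / k ^ t = Q := by
  obtain ⟨y, rfl⟩ := Nat.exists_eq_add_of_le h1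
  have hy : y < k ^ L := by omega
  refine ⟨fun j hj hjt => ?_, ?_⟩
  · rw [dg_low hk _ _ hjt]
    exact dg_zero_of_lt (hy.trans_le (Nat.pow_le_pow_right (by omega) hj))
  · rw [mul_comm, Nat.mul_add_div (by positivity),
      Nat.div_eq_of_lt (hy.trans_le (Nat.pow_le_pow_right (by omega) hLt)), add_zero]

/-- Digits of a number slightly below the multiple `Q * k ^ t`. -/
lemma dg_lo {k : ℕ} (hk : 2 ≤ k) {L t Q m : ℕ} (hLt : L ≤ t) (h1 : m < Q * k ^ t)
    (h2 : Q * k ^ t ≤ m + k ^ L) :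
    (∀ j, L ≤ j → j < t → dg k m j = k - 1) ∧ m / k ^ t = Q - 1 := by
  obtain ⟨s, rfl⟩ := Nat.exists_eq_add_of_le hLt
  have hQ : Q ≠ 0 := by rintro rfl; simp at h1
  obtain ⟨q, rfl⟩ := Nat.exists_eq_succ_of_ne_zero hQ
  have hs : 0 < k ^ s := by positivity
  obtain ⟨a, ha⟩ := Nat.exists_eq_add_of_le' hs
  have hL : 0 < k ^ L := by positivity
  have e : k ^ (L + s) = a * k ^ L + k ^ L := by rw [pow_add, ha]; ring
  have e2 : (q + 1) * k ^ (L + s) = q * k ^ (L + s) + (a * k ^ L + k ^ L) := by rw [add_mul, e]; ring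
  simp only [Nat.succ_eq_add_one] at *
  obtain ⟨z, rfl⟩ : ∃ z, m = q * k ^ (L + s) + (a * k ^ L + z) :=
    ⟨m - (q * k ^ (L + s) + a * k ^ L), by omega⟩
  have hz : z < k ^ L := by omega
  refine ⟨fun j hj hjt => ?_, ?_⟩
  · obtain ⟨r, rfl⟩ := Nat.exists_eq_add_of_le hj
    rw [dg_low hk _ _ hjt, dg_high hk _ _ hz]
    have : a = k ^ s - 1 := by omega
    rw [this, dg_pow_sub_one hk (by omega)]
  · rw [mul_comm, Nat.mul_add_div (by positivity), Nat.div_eq_of_lt (by omega)]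
    simp

lemma exists_digits {k : ℕ} (hk : 2 ≤ k) (g : ℕ → ℕ) (hg : ∀ j, g j < k) (T : ℕ) :
    ∃ X < k ^ T, ∀ j < T, dg k X j = g j := by
  induction T with
  | zero => exact ⟨0, by simp, by simp⟩
  | succ T ih =>
    obtain ⟨X, hX, h⟩ := ih
    refine ⟨g T * k ^ T + X, ?_, fun j hj => ?_⟩
    · have : (g T + 1) * k ^ T ≤ k * k ^ T := Nat.mul_le_mul_right _ (hg T)
      rw [pow_succ]
      nlinarith
    · rcases Nat.lt_succ_iff_lt_or_eq.1 hj with h1 | rfl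
      · rw [dg_low hk _ _ h1, h j h1]
      · have := dg_high hk (g j) 0 hX
        rw [add_zero] at this
        rw [this]
        simp [dg, Nat.mod_eq_of_lt (hg j)]

/-! ### Length of the representation -/

lemma len_of_ne {k m : ℕ} (hm : m ≠ 0) : len k m = (Nat.digits k m).length := by
  simp [len, rep, hm]

lemma len_zero (k : ℕ) : len k 0 = 1 := by simp [len, rep]

lemma len_pos {k : ℕ} (m : ℕ) : 1 ≤ len k m := by
  by_cases hm : m = 0
  · simp [hm, len_zero]
  · rw [len_of_ne hm]
    exact List.length_pos_iff.2 (Nat.digits_ne_nil_iff_ne_zero.2 hm)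

lemma lt_pow_len {k : ℕ} (hk : 2 ≤ k) (m : ℕ) : m < k ^ len k m := by
  by_cases hm : m = 0
  · subst hm; positivity
  · rw [len_of_ne hm, ← Nat.digits_length_le_iff (by omega)]

lemma len_le {k : ℕ} (hk : 2 ≤ k) {m T : ℕ} (hT : 1 ≤ T) (h : m < k ^ T) : len k m ≤ T := by
  by_cases hm : m = 0
  · subst hm; rwa [len_zero]
  · rwa [len_of_ne hm, Nat.digits_length_le_iff (by omega)]

lemma lt_len {k : ℕ} (hk : 2 ≤ k) {m T : ℕ} (h : k ^ T ≤ m) : T < len k m := by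
  have hm : m ≠ 0 := by have : 0 < k ^ T := by positivity
                        omega
  rwa [len_of_ne hm, Nat.lt_digits_length_iff (by omega)]

lemma pow_le_of_lt_len {k : ℕ} (hk : 2 ≤ k) {m T : ℕ} (hm : m ≠ 0) (h : T < len k m) :
    k ^ T ≤ m := by
  rwa [len_of_ne hm, Nat.lt_digits_length_iff (by omega)] at h

lemma len_mono {k : ℕ} (hk : 2 ≤ k) {m m' : ℕ} (h : m ≤ m') : len k m ≤ len k m' :=
  len_le hk (len_pos _) (h.trans_lt (lt_pow_len hk m'))

lemma len_eq {k : ℕ} (hk : 2 ≤ k) {m T : ℕ} (h1 : k ^ T ≤ m) (h2 : m < k ^ (T + 1)) :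
    len k m = T + 1 :=
  le_antisymm (len_le hk (by omega) h2) (lt_len hk h1)

lemma len_le_of_div {k : ℕ} (hk : 2 ≤ k) {m m' j : ℕ} (h : m / k ^ j = m' / k ^ j)
    (h0 : m / k ^ j ≠ 0) : len k m ≤ len k m' := by
  have hm' : k ^ j ≤ m' := by
    by_contra hc
    exact h0 (h.trans (Nat.div_eq_of_lt (by omega)))
  have hj := lt_len hk hm'
  apply len_le hk (len_pos _)
  have h1 := lt_pow_len hk m'
  obtain ⟨s, hs⟩ := Nat.exists_eq_add_of_le hj.le
  rw [hs, pow_add, mul_comm] at h1 ⊢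
  rw [← Nat.div_lt_iff_lt_mul (by positivity)] at h1 ⊢
  rwa [h]

lemma len_eq_of_div {k : ℕ} (hk : 2 ≤ k) {m m' j : ℕ} (h : m / k ^ j = m' / k ^ j)
    (h0 : m / k ^ j ≠ 0) : len k m = len k m' :=
  le_antisymm (len_le_of_div hk h h0) (len_le_of_div hk h.symm (h ▸ h0))

lemma dg_top_ne {k : ℕ} (hk : 2 ≤ k) {m : ℕ} (hm : m ≠ 0) : dg k m (len k m - 1) ≠ 0 := by
  have h1 := lt_pow_len hk m
  have h0 := len_pos (k := k) m
  have h2 := pow_le_of_lt_len hk hm (T := len k m - 1) (by omega)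
  obtain ⟨s, hs⟩ := Nat.exists_eq_add_of_le' h0
  rw [hs] at h1 h2 ⊢
  simp only [Nat.add_sub_cancel] at h2 ⊢
  unfold dg
  rw [Nat.mod_eq_of_lt]
  · exact (Nat.div_pos h2 (by positivity)).ne'
  · rwa [Nat.div_lt_iff_lt_mul (by positivity), ← pow_succ']

lemma le_of_dg_ne {k : ℕ} (hk : 2 ≤ k) {m j T : ℕ} (h : dg k m j ≠ 0) (hm : m < k ^ T) : j < T := by
  by_contra hc
  exact h (dg_zero_of_lt (hm.trans_le (Nat.pow_le_pow_right (by omega) (by omega))))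

/-! ### Counting occurrences -/

lemma dg_rep {k : ℕ} (hk : 2 ≤ k) (m i : ℕ) (hi : i < (rep k m).length) :
    (rep k m)[i] = dg k m (len k m - 1 - i) := by
  by_cases hm : m = 0
  · subst hm
    have : i = 0 := by have := len_zero k; unfold len at this; omega
    subst this
    simp [rep, dg]
  · have e : rep k m = (Nat.digits k m).reverse := by simp [rep, hm]
    simp only [e, List.getElem_reverse]
    rw [dg, ← Nat.getD_digits _ _ hk, len_of_ne hm, List.getD_eq_getElem]

theorem dseq_eq_cnt {k : ℕ} (hk : 2 ≤ k) {w : List ℕ} (hw : w ≠ []) (m : ℕ) :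
    dseq k w m = cnt k w.length (pat w) (len k m) m := by
  have hl : 1 ≤ w.length := List.length_pos_iff.2 hw
  have key : ∀ i, w.isPrefixOf ((rep k m).drop i) = true ↔
      i + w.length ≤ len k m ∧ Occ k w.length (pat w) m (len k m - w.length - i) := by
    intro i
    rw [List.isPrefixOf_iff_prefix, List.prefix_iff_getElem]
    simp only [List.length_drop, List.getElem_drop]
    constructor
    · rintro ⟨h1, h2⟩
      have h1' : i + w.length ≤ len k m := by unfold len; omega
      refine ⟨h1', fun t ht => ?_⟩
      have := h2 (w.length - 1 - t) (by omega)
      rw [dg_rep hk] at this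
      rw [pat, List.getD_eq_getElem _ _ (by simpa using ht), List.getElem_reverse, this]
      congr 1
      omega
    · rintro ⟨h1, h2⟩
      refine ⟨by unfold len at h1; omega, fun s hs => ?_⟩
      have := h2 (w.length - 1 - s) (by omega)
      rw [pat, List.getD_eq_getElem _ _ (by simp; omega), List.getElem_reverse] at this
      rw [dg_rep hk]
      have e : w.length - 1 - (w.length - 1 - s) = s := by omega
      simp only [e] at this
      rw [← this]
      congr 1
      omega
  have h1 : dseq k w m = ((Finset.range (len k m)).filter
      (fun i => w.isPrefixOf ((rep k m).drop i) = true)).card := by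
    unfold dseq occ len
    rw [← List.toFinset_range, ← List.toFinset_filter,
      List.toFinset_card_of_nodup (List.nodup_range.filter _)]
  rw [h1, cnt]
  apply Finset.card_nbij' (fun i => len k m - w.length - i) (fun i => len k m - w.length - i)
  · intro i hi
    simp only [Finset.coe_filter, Finset.mem_range, Set.mem_ofPred_eq, key] at hi ⊢
    exact ⟨by omega, hi.2.2⟩
  · intro i hi
    simp only [Finset.coe_filter, Finset.mem_range, Set.mem_ofPred_eq, key] at hi ⊢
    refine ⟨by omega, by omega, ?_⟩
    convert hi.2 using 1
    omega
  · intro i hi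
    simp only [Finset.coe_filter, Finset.mem_range, Set.mem_ofPred_eq, key] at hi ⊢
    omega
  · intro i hi
    simp only [Finset.coe_filter, Finset.mem_range, Set.mem_ofPred_eq] at hi ⊢
    omega

lemma Occ.congr {k ℓ : ℕ} {W : ℕ → ℕ} {m m' j : ℕ} (h : Occ k ℓ W m j)
    (e : ∀ i, j ≤ i → i < j + ℓ → dg k m' i = dg k m i) : Occ k ℓ W m' j :=
  fun t ht => (e _ (by omega) (by omega)).trans (h t ht)

lemma cnt_congr {k ℓ : ℕ} {W : ℕ → ℕ} {T m m' : ℕ} (h : ∀ j < T, dg k m j = dg k m' j) :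
    cnt k ℓ W T m = cnt k ℓ W T m' := by
  unfold cnt
  congr 1
  ext j
  simp only [Finset.mem_filter, Finset.mem_range]
  constructor
  · rintro ⟨h1, h2⟩
    exact ⟨h1, h2.congr fun i _ hi => (h i (by omega)).symm⟩
  · rintro ⟨h1, h2⟩
    exact ⟨h1, h2.congr fun i _ hi => h i (by omega)⟩

lemma cnt_mod {k ℓ : ℕ} (hk : 2 ≤ k) {W : ℕ → ℕ} {T m m' : ℕ} (h : m % k ^ T = m' % k ^ T) :
    cnt k ℓ W T m = cnt k ℓ W T m' :=
  cnt_congr fun _ hj => dg_congr hk h hj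

lemma cnt_le (k ℓ : ℕ) (W : ℕ → ℕ) (T m : ℕ) : cnt k ℓ W T m ≤ T + 1 - ℓ := by
  classical
  unfold cnt
  exact (Finset.card_filter_le _ _).trans (by simp)

/-- Discarding high digits which meet no occurrence does not change the count. -/
lemma cnt_eq_of_no {k ℓ : ℕ} {W : ℕ → ℕ} {T T' m : ℕ} (hT : T ≤ T')
    (h : ∀ j, T < j + ℓ → j + ℓ ≤ T' → ¬ Occ k ℓ W m j) :
    cnt k ℓ W T' m = cnt k ℓ W T m := by
  unfold cnt
  congr 1
  ext j
  simp only [Finset.mem_filter, Finset.mem_range]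
  constructor
  · rintro ⟨h1, h2⟩
    refine ⟨?_, h2⟩
    by_contra hc
    exact h j (by omega) (by omega) h2
  · rintro ⟨h1, h2⟩
    exact ⟨by omega, h2⟩

/-- Cutting the word just inside its leftmost occurrence, which sits at `j0`, removes exactly that
occurrence. -/
lemma cnt_top {k ℓ : ℕ} (hl : 1 ≤ ℓ) {W : ℕ → ℕ} {T m j0 : ℕ} (hj : j0 + ℓ ≤ T)
    (h0 : Occ k ℓ W m j0) (h : ∀ j, j0 < j → j + ℓ ≤ T → ¬ Occ k ℓ W m j) :
    cnt k ℓ W T m = cnt k ℓ W (j0 + ℓ - 1) m + 1 := by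
  classical
  unfold cnt
  rw [← Finset.card_insert_of_notMem (a := j0)]
  · congr 1
    ext j
    simp only [Finset.mem_filter, Finset.mem_range, Finset.mem_insert]
    constructor
    · rintro ⟨h1, h2⟩
      by_cases hjj : j0 < j
      · exact absurd h2 (h j hjj (by omega))
      · by_cases e : j = j0
        · exact Or.inl e
        · exact Or.inr ⟨by omega, h2⟩
    · rintro (rfl | ⟨h1, h2⟩)
      · exact ⟨by omega, h0⟩
      · exact ⟨by omega, h2⟩
  · simp only [Finset.mem_filter, Finset.mem_range]
    omega

/-- If there is an occurrence at all, there is a leftmost one. -/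
lemma exists_top {k ℓ : ℕ} {W : ℕ → ℕ} {T m : ℕ} (h : 1 ≤ cnt k ℓ W T m) :
    ∃ j0, j0 + ℓ ≤ T ∧ Occ k ℓ W m j0 ∧ ∀ j, j0 < j → j + ℓ ≤ T → ¬ Occ k ℓ W m j := by
  classical
  unfold cnt at h
  have hne := Finset.card_pos.1 h
  have hm := Finset.max'_mem _ hne
  set j0 := Finset.max' _ hne with hj0
  simp only [Finset.mem_filter, Finset.mem_range] at hm
  refine ⟨j0, by omega, hm.2, fun j hj hjT ho => ?_⟩
  refine absurd ?_ (Nat.not_le_of_lt hj)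
  exact Finset.le_max' _ j
    (Finset.mem_filter.2 ⟨Finset.mem_range.2 (show j < T + 1 - ℓ by omega), ho⟩)

/-- More than `L` occurrences cannot all sit at weights below `L`. -/
lemma exists_ge {k ℓ : ℕ} (hl : 1 ≤ ℓ) {W : ℕ → ℕ} {T m L : ℕ} (h : L + 1 ≤ cnt k ℓ W T m) :
    ∃ j, L ≤ j ∧ j + ℓ ≤ T ∧ Occ k ℓ W m j := by
  by_contra hc
  push Not at hc
  by_cases hLT : L + ℓ - 1 ≤ T
  · have := cnt_eq_of_no (k := k) (W := W) (m := m) hLT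
      fun j h1 h2 => hc j (by omega) h2
    have h2 := cnt_le k ℓ W (L + ℓ - 1) m
    omega
  · have h2 := cnt_le k ℓ W T m
    omega

/-- A pattern whose leading letter is nonzero does not see leading zeros. -/
lemma dseq_of_lead {k : ℕ} (hk : 2 ≤ k) {w : List ℕ} (hw : w ≠ [])
    (ha : pat w (w.length - 1) ≠ 0) {m T : ℕ} (hm : m < k ^ T) :
    dseq k w m = cnt k w.length (pat w) T m := by
  have hl : 1 ≤ w.length := List.length_pos_iff.2 hw
  have no : ∀ T, m < k ^ T → ∀ j, T < j + w.length → ¬ Occ k w.length (pat w) m j := by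
    intro T hT j hj ho
    have := ho (w.length - 1) (by omega)
    have h2 := le_of_dg_ne hk (j := j + (w.length - 1)) (by rw [this]; exact ha) hT
    omega
  rw [dseq_eq_cnt hk hw]
  rcases le_total (len k m) T with h | h
  · exact (cnt_eq_of_no h fun j h1 _ => no _ (lt_pow_len hk m) j h1).symm
  · exact cnt_eq_of_no h fun j h1 _ => no _ hm j h1

/-! ### Realising counts in padded words by integers -/

/-- If the interval `[i, i + n)` does not cross a multiple of `k ^ T`, then the counts in the `T`
lowest digits are values of the digital sequence on another interval: a leading `1` protects the
leading zeros when `w` starts with `0`. -/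
lemma realize {k : ℕ} (hk : 2 ≤ k) {w : List ℕ} (hw : w ≠ []) {T i n : ℕ}
    (h : ∀ j < n, (i + j) / k ^ T = i / k ^ T) :
    ∃ i', ∀ j < n, dseq k w (i' + j) = cnt k w.length (pat w) T (i + j) := by
  have hl : 1 ≤ w.length := List.length_pos_iff.2 hw
  have hlt : ∀ j < n, i % k ^ T + j = (i + j) % k ^ T := by
    intro j hj
    have h1 := Nat.div_add_mod (i + j) (k ^ T)
    have h2 := Nat.div_add_mod i (k ^ T)
    rw [h j hj] at h1
    omega
  have hpos : 0 < k ^ T := by positivity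
  by_cases ha : pat w (w.length - 1) = 0
  · refine ⟨k ^ T + i % k ^ T, fun j hj => ?_⟩
    have e : k ^ T + i % k ^ T + j = 1 * k ^ T + (i + j) % k ^ T := by
      rw [add_assoc, hlt j hj, one_mul]
    have hr : (i + j) % k ^ T < k ^ T := Nat.mod_lt _ hpos
    have hlen : len k (1 * k ^ T + (i + j) % k ^ T) = T + 1 := by
      apply len_eq hk (by rw [one_mul]; exact Nat.le_add_right _ _)
      rw [pow_succ]
      nlinarith
    rw [e, dseq_eq_cnt hk hw, hlen, cnt_eq_of_no (T := T) (by omega)]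
    · apply cnt_mod hk
      simp
    · intro j' h1 h2 ho
      have h3 := ho (w.length - 1) (by omega)
      have h4 : j' + (w.length - 1) = T + 0 := by omega
      rw [ha, h4, dg_high hk _ _ hr] at h3
      simp [dg, Nat.mod_eq_of_lt hk] at h3
  · refine ⟨i % k ^ T, fun j hj => ?_⟩
    have hr : (i + j) % k ^ T < k ^ T := Nat.mod_lt _ hpos
    rw [hlt j hj, dseq_of_lead hk hw ha hr]
    apply cnt_mod hk
    simp

/-- If `w` is a power of the letter `0` or `k - 1` (and not `1` in base `2`), then for `m` within
`k ^ L` of `k ^ T`, with `L < T`, the occurrences of `w` can be counted in the `T` lowest digits. -/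
lemma dseq_cross {k : ℕ} (hk : 2 ≤ k) {w : List ℕ} (hw : w ≠ []) {f : ℕ}
    (hf : f = 0 ∨ f = k - 1) (hwf : ∀ t < w.length, pat w t = f)
    (hne : ¬ (k = 2 ∧ w.length = 1 ∧ f = 1)) {T L m : ℕ} (hLT : L + 1 ≤ T)
    (h1 : k ^ T ≤ m + k ^ L) (h2 : m < k ^ T + k ^ L) :
    dseq k w m = cnt k w.length (pat w) T m := by
  have hl : 1 ≤ w.length := List.length_pos_iff.2 hw
  rw [dseq_eq_cnt hk hw]
  rcases le_or_gt (k ^ T) m with hm | hm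
  · obtain ⟨d0, dT⟩ := dg_hi hk (Q := 1) (L := L) (t := T) (m := m) (by omega) (by omega) (by omega)
    have d1 : dg k m T = 1 := by unfold dg; rw [dT, Nat.mod_eq_of_lt hk]
    have hlen : len k m = T + 1 := by
      apply len_eq hk hm
      have : k ^ L ≤ k ^ T := Nat.pow_le_pow_right (by omega) (by omega)
      have : k ^ L < k ^ T := Nat.pow_lt_pow_right (by omega) (by omega)
      rw [pow_succ]
      nlinarith
    rw [hlen]
    apply cnt_eq_of_no (by omega)
    intro j h3 h4 ho
    have e1 := ho (w.length - 1) (by omega)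
    rw [hwf _ (by omega), show j + (w.length - 1) = T by omega, d1] at e1
    have hf1 : f = k - 1 := by omega
    have hk2 : k = 2 := by omega
    have e2 := ho (w.length - 2) (by omega)
    rw [hwf _ (by omega), show j + (w.length - 2) = T - 1 by omega,
      d0 _ (by omega) (by omega)] at e2
    omega
  · obtain ⟨d0, -⟩ := dg_lo hk (Q := 1) (L := L) (t := T) (m := m) (by omega) (by omega) (by omega)
    have hd := d0 (T - 1) (by omega) (by omega)
    have h3 : len k m ≤ T := len_le hk (by omega) hm
    have h4 := le_of_dg_ne hk (j := T - 1) (by rw [hd]; omega) (lt_pow_len hk m)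
    rw [show len k m = T by omega]

/-- The counterpart of `realize` for an interval that does cross a multiple `M` of `k ^ T`: translate
it so that it crosses `k ^ T` at the same place. -/
lemma realize_cross {k : ℕ} (hk : 2 ≤ k) {w : List ℕ} (hw : w ≠ []) {f : ℕ}
    (hf : f = 0 ∨ f = k - 1) (hwf : ∀ t < w.length, pat w t = f)
    (hne : ¬ (k = 2 ∧ w.length = 1 ∧ f = 1)) {T L i n M : ℕ} (hLT : L + 1 ≤ T) (hn : n ≤ k ^ L)
    (hM : k ^ T ∣ M) (hi : i < M) (hin : M < i + n) :
    ∃ i', ∀ j < n, dseq k w (i' + j) = cnt k w.length (pat w) T (i + j) := by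
  have hL : k ^ L ≤ k ^ T := Nat.pow_le_pow_right (by omega) (by omega)
  refine ⟨k ^ T + i - M, fun j hj => ?_⟩
  rw [dseq_cross hk hw hf hwf hne hLT (by omega) (by omega)]
  apply cnt_mod hk
  have e : k ^ T + i - M + j + M = i + j + k ^ T := by omega
  obtain ⟨c, rfl⟩ := hM
  have := congrArg (· % k ^ T) e
  simpa using this

/-! ### Raising every value by one -/

lemma pat_lt {k : ℕ} (hk : 2 ≤ k) {w : List ℕ} (hwk : ∀ d ∈ w, d < k) (t : ℕ) : pat w t < k := by
  unfold pat
  rcases lt_or_ge t w.reverse.length with h | h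
  · rw [List.getD_eq_getElem _ _ h]
    exact hwk _ (List.mem_reverse.1 (List.getElem_mem h))
  · rw [List.getD_eq_default _ _ h]
    omega

/-- Prefixing the word `w e ^ |w|`, where `e` differs from the first letter of `w`, creates exactly
one occurrence of `w`: an overlap of `w` with `w e ^ |w|` at another place would make `w` a power
of `e`. -/
lemma exists_leading_block {k : ℕ} (hk : 2 ≤ k) {w : List ℕ} (hw : w ≠ []) (hwk : ∀ d ∈ w, d < k) :
    ∃ X < k ^ (2 * w.length), ∀ T m, m < k ^ T →
      cnt k w.length (pat w) (T + 2 * w.length) (X * k ^ T + m) =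
        cnt k w.length (pat w) T m + 1 := by
  have hl : 1 ≤ w.length := List.length_pos_iff.2 hw
  obtain ⟨e, he, hea⟩ : ∃ e < k, pat w (w.length - 1) ≠ e := by
    by_cases h : pat w (w.length - 1) = 0
    · exact ⟨1, by omega, by omega⟩
    · exact ⟨0, by omega, h⟩
  obtain ⟨X, hX, hd⟩ := exists_digits hk
    (fun j => if j < w.length then e else pat w (j - w.length))
    (fun j => by split_ifs; exacts [he, pat_lt hk hwk _]) (2 * w.length)
  refine ⟨X, hX, fun T m hm => ?_⟩
  have dX : ∀ j, T ≤ j → j < T + 2 * w.length → dg k (X * k ^ T + m) j =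
      if j < T + w.length then e else pat w (j - (T + w.length)) := by
    intro j h1 h2
    obtain ⟨s, rfl⟩ := Nat.exists_eq_add_of_le h1
    rw [dg_high hk _ _ hm, hd s (by omega)]
    by_cases hs : s < w.length
    · rw [if_pos hs, if_pos (by omega)]
    · rw [if_neg hs, if_neg (by omega)]
      congr 1
      omega
  rw [cnt_top hl (j0 := T + w.length) (by omega), cnt_eq_of_no (T := T) (by omega)]
  · congr 1
    exact cnt_congr fun j hj => dg_low hk _ _ hj
  · intro j h1 h2 ho
    -- every letter of `w` is `e`, by induction along the shift `T + |w| - j`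
    have all : ∀ t, t < w.length → T ≤ j + t → pat w t = e := by
      intro t
      induction t using Nat.strong_induction_on with
      | _ t ih =>
        intro ht hT
        have h3 := ho t ht
        rw [dX _ hT (by omega)] at h3
        by_cases hc : j + t < T + w.length
        · rw [if_pos hc] at h3
          exact h3.symm
        · rw [if_neg hc] at h3
          rw [← h3]
          by_cases hT' : T ≤ j + (j + t - (T + w.length))
          · exact ih _ (by omega) (by omega) hT'
          · omega
    exact hea (all _ (by omega) (by omega))
  · intro t ht
    rw [dX _ (by omega) (by omega), if_neg (by omega)]
    congr 1
    omega
  · intro j h1 h2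
    omega

lemma forward_simple {k : ℕ} (hk : 2 ≤ k) {w : List ℕ} (hw : w ≠ []) (hwk : ∀ d ∈ w, d < k)
    {i n T : ℕ} (hT : i + n ≤ k ^ T)
    (hs : ∀ j < n, dseq k w (i + j) = cnt k w.length (pat w) T (i + j)) :
    ∃ i', ∀ j < n, dseq k w (i' + j) = dseq k w (i + j) + 1 := by
  obtain ⟨X, hX, h⟩ := exists_leading_block hk hw hwk
  have hlt : ∀ j, i + j < k ^ T → X * k ^ T + i + j < k ^ (T + 2 * w.length) := by
    intro j hj
    have : (X + 1) * k ^ T ≤ k ^ (2 * w.length) * k ^ T := Nat.mul_le_mul_right _ hX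
    rw [add_comm T, pow_add]
    nlinarith
  obtain ⟨i', hi'⟩ := realize hk hw (T := T + 2 * w.length) (i := X * k ^ T + i) (n := n) (by
    intro j hj
    rw [Nat.div_eq_of_lt (hlt j (by omega)), Nat.div_eq_of_lt (show X * k ^ T + i < _ from hlt 0 (by omega))])
  refine ⟨i', fun j hj => ?_⟩
  rw [hi' j hj, hs j hj, add_assoc, h T _ (by omega)]

/-- The word reads `… g f ^ (t - L) y` with `g ≠ f` at weight `k ^ t`, and its leftmost occurrence of
`f ^ ℓ` is the one starting right after `g`. -/
lemma cnt_main {k ℓ : ℕ} (hl : 1 ≤ ℓ) {W : ℕ → ℕ} {f L t m Λ : ℕ} (hW : ∀ s < ℓ, W s = f)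
    (hLt : L + ℓ ≤ t) (hd : ∀ j, L ≤ j → j < t → dg k m j = f) (ht : dg k m t ≠ f) (hΛ : t ≤ Λ)
    (hno : ∀ j, t < j → j + ℓ ≤ Λ → ¬ Occ k ℓ W m j) :
    cnt k ℓ W Λ m = cnt k ℓ W (t - 1) m + 1 := by
  rw [cnt_top hl (j0 := t - ℓ) (by omega)]
  · congr 2
    omega
  · intro s hs
    rw [hW s hs, hd _ (by omega) (by omega)]
  · intro j h1 h2 ho
    rcases le_or_gt j t with h3 | h3
    · have := ho (t - j) (by omega)
      rw [hW _ (by omega), show j + (t - j) = t by omega] at this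
      exact ht this
    · exact hno j h3 h2 ho

/-- The leftmost occurrence of `f ^ ℓ` ends at weight `k ^ t` and is followed by a letter
different from `f`. -/
lemma cnt_other {k ℓ : ℕ} (hl : 1 ≤ ℓ) {W : ℕ → ℕ} {f t m Λ : ℕ} (hW : ∀ s < ℓ, W s = f)
    (ht1 : 1 ≤ t) (hd : dg k m (t - 1) ≠ f) (ho : Occ k ℓ W m t) (hΛ : t + ℓ ≤ Λ)
    (hno : ∀ j, t < j → j + ℓ ≤ Λ → ¬ Occ k ℓ W m j) :
    cnt k ℓ W Λ m = cnt k ℓ W (t - 1) m + 1 := by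
  rw [cnt_top hl hΛ ho hno, cnt_eq_of_no (T := t - 1) (by omega)]
  intro j h1 h2 ho'
  have := ho' (t - 1 - j) (by omega)
  rw [hW _ (by omega), show j + (t - 1 - j) = t - 1 by omega] at this
  exact hd this

/-- The interval crosses `k ^ T` and `w` is a power of `0`. The new interval crosses
`1 0 ^ (|w| - 1) 1 0 ^ (T + 1)`: above this number the run of zeros has become longer by one, and
below it there is one new occurrence inside the prefix `1 0 ^ |w|`. -/
lemma forward_zero {k : ℕ} (hk : 2 ≤ k) {w : List ℕ} (hw : w ≠ [])
    (hwf : ∀ t < w.length, pat w t = 0) {T L i n : ℕ} (hLT : L + w.length ≤ T) (hn : n ≤ k ^ L)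
    (hi : i < k ^ T) (hin : k ^ T < i + n) :
    ∃ i', ∀ j < n, dseq k w (i' + j) = dseq k w (i + j) + 1 := by
  have hl : 1 ≤ w.length := List.length_pos_iff.2 hw
  have hLp : k ^ L ≤ k ^ T := Nat.pow_le_pow_right (by omega) (by omega)
  have hTp : k ^ T ≤ k ^ (T + 1) := Nat.pow_le_pow_right (by omega) (by omega)
  have hTp2 : 2 * k ^ (T + 1) ≤ k ^ (T + 1 + w.length) := by
    rw [pow_add _ (T + 1), mul_comm 2]
    exact Nat.mul_le_mul_left _ (hk.trans (Nat.le_self_pow (n := w.length) (by omega) k))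
  have hTp3 : 2 * k ^ (T + 1 + w.length) ≤ k ^ (T + 1 + w.length + 1) := by
    rw [pow_succ, mul_comm 2]
    exact Nat.mul_le_mul_left _ hk
  have hQ : (k ^ w.length + 1) * k ^ (T + 1) = k ^ (T + 1 + w.length) + k ^ (T + 1) := by
    rw [add_mul, one_mul, ← pow_add, add_comm w.length]
  have dpow : ∀ j, dg k (k ^ w.length) j = if j = w.length then 1 else 0 := by
    intro j
    by_cases h : j = w.length
    · subst h
      have h0 : 0 < k ^ w.length := by positivity
      simp [dg, Nat.div_self h0, Nat.mod_eq_of_lt hk]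
    · rw [if_neg h]
      rcases lt_or_gt_of_ne h with h | h
      · have := dg_low hk 1 0 h
        simpa [dg] using this
      · exact dg_zero_of_lt (Nat.pow_lt_pow_right (by omega) h)
  refine ⟨k ^ (T + 1 + w.length) + k ^ (T + 1) + i - k ^ T, fun j hj => ?_⟩
  rw [dseq_cross hk hw (Or.inl rfl) hwf (by omega) (T := T) (L := L) (m := i + j) (by omega)
    (by omega) (by omega)]
  set m := k ^ (T + 1 + w.length) + k ^ (T + 1) + i - k ^ T + j with hm
  have hcong : cnt k w.length (pat w) T (i + j) = cnt k w.length (pat w) T m := by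
    apply cnt_mod hk
    have e : m + k ^ T = i + j + k ^ T * (k ^ (1 + w.length) + k) := by
      have e1 : k ^ T * (k ^ (1 + w.length) + k) = k ^ (T + 1 + w.length) + k ^ (T + 1) := by ring
      omega
    have := congrArg (· % k ^ T) e
    simpa using this.symm
  have hlen : len k m = T + 1 + w.length + 1 := len_eq hk (by omega) (by omega)
  rw [hcong, dseq_eq_cnt hk hw, hlen]
  -- the leading digit `1` of `m` excludes an occurrence further left
  have hno : dg k m (T + 1 + w.length) ≠ 0 → ∀ j', T + 1 < j' →
      j' + w.length ≤ T + 1 + w.length + 1 → ¬ Occ k w.length (pat w) m j' := by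
    intro hd j' h1 h2 ho
    have := ho (w.length - 1) (by omega)
    rw [hwf _ (by omega), show j' + (w.length - 1) = T + 1 + w.length by omega] at this
    exact hd this
  have hd1 : dg k m (T + 1 + w.length) ≠ 0 := by
    have := dg_top_ne hk (m := m) (by have : 0 < k ^ (T + 1) := by positivity
                                      omega)
    rwa [hlen] at this
  rcases le_or_gt ((k ^ w.length + 1) * k ^ (T + 1)) m with h | h
  · obtain ⟨d0, dq⟩ := dg_hi hk (L := L) (by omega) h (by omega)
    refine cnt_main hl hwf (L := L) (t := T + 1) (by omega) d0 ?_ (by omega) (hno hd1)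
    obtain ⟨c, hc⟩ : k ∣ k ^ w.length := dvd_pow_self _ (by omega)
    unfold dg
    rw [dq, hc, Nat.mul_add_mod, Nat.mod_eq_of_lt hk]
    omega
  · obtain ⟨d0, dq⟩ := dg_lo hk (L := L) (by omega) h (by omega)
    refine cnt_other hl hwf (t := T + 1) (by omega) ?_ ?_ (by omega) (hno hd1)
    · rw [d0 _ (by omega) (by omega)]
      omega
    · intro s hs
      have e : dg k m (T + 1 + s) = dg k (k ^ w.length) s := by
        unfold dg
        rw [pow_add, ← Nat.div_div_eq_div_mul, dq, Nat.add_sub_cancel]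
      rw [e, dpow, if_neg (by omega), hwf s hs]

/-- A factor of length `n ≤ k ^ L` with a letter at least `L + 1` stays a factor when all its letters
are raised by one. The prefix `w e ^ |w|` achieves this, unless `w` starts with `0` and the
interval crosses a power of `k`; the large letter then forces `w` to be a power of `0`. -/
theorem forward {k : ℕ} (hk : 2 ≤ k) {w : List ℕ} (hw : w ≠ []) (hwk : ∀ d ∈ w, d < k)
    {L i n : ℕ} (hn : n ≤ k ^ L) (hbig : ∃ j < n, L + 1 ≤ dseq k w (i + j)) :
    ∃ i', ∀ j < n, dseq k w (i' + j) = dseq k w (i + j) + 1 := by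
  have hl : 1 ≤ w.length := List.length_pos_iff.2 hw
  by_cases ha : pat w (w.length - 1) = 0
  swap
  · have h := (lt_pow_len hk (i + n)).le
    exact forward_simple hk hw hwk h fun j hj => dseq_of_lead hk hw ha (by omega)
  by_cases hT : i + n ≤ k ^ len k i
  · refine forward_simple hk hw hwk hT fun j hj => ?_
    rw [dseq_eq_cnt hk hw]
    congr 1
    exact le_antisymm (len_le hk (len_pos _) (by omega)) (len_mono hk (by omega))
  have hi := lt_pow_len hk i
  set T := len k i with hTdef
  obtain ⟨j, hj, hb⟩ := hbig
  rw [dseq_eq_cnt hk hw] at hb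
  obtain ⟨j0, hj0, hj0T, ho⟩ := exists_ge hl hb
  have htop := ho (w.length - 1) (by omega)
  rw [ha] at htop
  have hLpos : 0 < L := by
    rcases Nat.eq_zero_or_pos L with h | h
    · subst h
      simp at hn
      omega
    · exact h
  have hm0 : i + j ≠ 0 := by
    intro h0
    rw [h0, len_zero] at hj0T
    omega
  -- the leading digit is nonzero, so the occurrence does not touch it
  have hlt : j0 + w.length < len k (i + j) := by
    rcases Nat.lt_or_ge (j0 + w.length) (len k (i + j)) with h | h
    · exact h
    · have := dg_top_ne hk hm0
      rw [show len k (i + j) - 1 = j0 + (w.length - 1) by omega] at this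
      exact absurd htop this
  have hpow : k ^ (L + 1) ≤ i + j := pow_le_of_lt_len hk hm0 (by omega)
  have hLT : L < T := by
    by_contra hc
    have h1 : k ^ T ≤ k ^ L := Nat.pow_le_pow_right (by omega) (by omega)
    have h2 : 2 * k ^ L ≤ k ^ (L + 1) := by
      rw [pow_succ, mul_comm 2]; exact Nat.mul_le_mul_left _ hk
    omega
  rcases le_or_gt (k ^ T) (i + j) with h | h
  · obtain ⟨d0, dq⟩ := dg_hi hk (Q := 1) (L := L) (t := T) hLT.le (by omega)
      (show i + j < _ by omega)
    have hlen : len k (i + j) ≤ T + 1 := by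
      apply len_le hk (by omega)
      have h1 : k ^ L ≤ k ^ T := Nat.pow_le_pow_right (by omega) (by omega)
      have h2 : 2 * k ^ T ≤ k ^ (T + 1) := by
        rw [pow_succ, mul_comm 2]; exact Nat.mul_le_mul_left _ hk
      omega
    refine forward_zero hk hw (fun t ht => ?_) (T := T) (L := L) (by omega) hn hi (by omega)
    rw [← ho t ht, d0 _ (by omega) (by omega)]
  · obtain ⟨d0, -⟩ := dg_lo hk (Q := 1) (L := L) (t := T) (m := i + j) hLT.le (by omega) (by omega)
    have hlen := len_le hk (by omega) h
    rw [d0 _ (by omega) (by omega)] at htop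
    omega

/-! ### Lowering every value by one -/

/-- Two occurrences `j1 < j0 ≤ t` inside a run of the letter `f` which occupies the weights
`L, …, t - 1` and is preceded by another letter force the pattern to be a power of `f`. -/
lemma pattern_const {k ℓ : ℕ} {W : ℕ → ℕ} {f L t m j0 j1 : ℕ}
    (hd : ∀ j, L ≤ j → j < t → dg k m j = f) (ht : dg k m t ≠ f) (hj0 : j0 ≤ t) (hL : L ≤ j1)
    (hj : j1 < j0) (h0 : Occ k ℓ W m j0) (h1 : Occ k ℓ W m j1) :
    j0 + ℓ ≤ t ∧ ∀ s < ℓ, W s = f := by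
  have h : j0 + ℓ ≤ t := by
    by_contra hc
    have e0 := h0 (t - j0) (by omega)
    have e1 := h1 (t - j0) (by omega)
    rw [show j0 + (t - j0) = t by omega] at e0
    rw [hd _ (by omega) (by omega)] at e1
    exact ht (e0.trans e1.symm)
  exact ⟨h, fun s hs => by rw [← h0 s hs, hd _ (by omega) (by omega)]⟩

lemma div_pred {k Q : ℕ} (hQ : ¬ k ∣ Q) : (Q - 1) / k = Q / k := by
  rcases Nat.eq_zero_or_pos Q with h | h
  · simp [h]
  · obtain ⟨q, rfl⟩ := Nat.exists_eq_add_of_le' h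
    rw [Nat.add_sub_cancel, Nat.succ_div, if_neg hQ, add_zero]

lemma mod_pred_ne {k Q : ℕ} (hk : 2 ≤ k) (hQ : ¬ k ∣ Q) : (Q - 1) % k ≠ k - 1 := by
  intro h
  apply hQ
  rcases Nat.eq_zero_or_pos Q with h0 | h0
  · simp [h0]
  · refine ⟨(Q - 1) / k + 1, ?_⟩
    have := Nat.div_add_mod (Q - 1) k
    rw [mul_add]
    omega

/-- The interval `[i, i + n)` crosses `Q * k ^ t` with `k ∤ Q`, and some member `m0` has its
leftmost occurrence at a weight `j0 ≤ t` and another one at `j1` with `L ≤ j1 < j0`. If all values on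
the interval are positive, then `w` is a power of `0` or of `k - 1`, and every value is one more
than the count in the `t - 1` lowest digits. -/
lemma backward_cross {k : ℕ} (hk : 2 ≤ k) {w : List ℕ} (hw : w ≠ [])
    {L i n t Q m0 j0 j1 : ℕ} (hn : n ≤ k ^ L) (hQ : ¬ k ∣ Q) (hi : i < Q * k ^ t)
    (hin : Q * k ^ t < i + n) (hpos : ∀ m, i ≤ m → m < i + n → 1 ≤ dseq k w m)
    (hm0 : i ≤ m0) (hm0' : m0 < i + n)
    (ho0 : Occ k w.length (pat w) m0 j0)
    (hmax : ∀ j, j0 < j → j + w.length ≤ len k m0 → ¬ Occ k w.length (pat w) m0 j)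
    (hLj : L ≤ j1) (hj : j1 < j0) (ho1 : Occ k w.length (pat w) m0 j1) (hjt : j0 ≤ t) :
    L + 2 ≤ t ∧ ∃ f, (f = 0 ∨ f = k - 1) ∧ (∀ s < w.length, pat w s = f) ∧
      ∀ m, i ≤ m → m < i + n → dseq k w m = cnt k w.length (pat w) (t - 1) m + 1 := by
  have hl : 1 ≤ w.length := List.length_pos_iff.2 hw
  have hQ0 : Q ≠ 0 := by rintro rfl; simp at hQ
  have hQk : Q % k ≠ 0 := fun h => hQ (Nat.dvd_of_mod_eq_zero h)
  have hM0 : 0 < Q * k ^ t := by positivity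
  have hHi : ∀ m, Q * k ^ t ≤ m → m < i + n →
      (∀ j, L ≤ j → j < t → dg k m j = 0) ∧ m / k ^ t = Q :=
    fun m h1 h2 => dg_hi hk (by omega) h1 (by omega)
  have hLo : ∀ m, i ≤ m → m < Q * k ^ t →
      (∀ j, L ≤ j → j < t → dg k m j = k - 1) ∧ m / k ^ t = Q - 1 :=
    fun m h1 h2 => dg_lo hk (by omega) h2 (by omega)
  -- digits above weight `k ^ t` are the same on the whole interval
  have hdiv : ∀ m, i ≤ m → m < i + n → m / k ^ (t + 1) = Q / k := by
    intro m h1 h2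
    rw [pow_succ, ← Nat.div_div_eq_div_mul]
    rcases le_or_gt (Q * k ^ t) m with h | h
    · rw [(hHi m h h2).2]
    · rw [(hLo m h1 h).2, div_pred hQ]
  have hup : ∀ m m', i ≤ m → m < i + n → i ≤ m' → m' < i + n → ∀ j, t < j →
      Occ k w.length (pat w) m j → Occ k w.length (pat w) m' j := by
    intro m m' a1 a2 b1 b2 j hj ho
    exact ho.congr fun s h1 _ =>
      dg_congr_div ((hdiv m' b1 b2).trans (hdiv m a1 a2).symm) (by omega)
  have hdt : ∀ m, dg k m t = m / k ^ t % k := fun m => rfl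
  rcases le_or_gt (Q * k ^ t) m0 with hm | hm
  · obtain ⟨d0, dq⟩ := hHi m0 hm hm0'
    obtain ⟨htℓ, hW⟩ := pattern_const d0 (by rw [hdt, dq]; exact hQk) hjt hLj hj ho0 ho1
    refine ⟨by omega, 0, Or.inl rfl, hW, fun m h1 h2 => ?_⟩
    rw [dseq_eq_cnt hk hw]
    rcases le_or_gt (Q * k ^ t) m with h | h
    · obtain ⟨e0, eq⟩ := hHi m h h2
      have hlen : len k m = len k m0 :=
        len_eq_of_div hk (eq.trans dq.symm) (by rw [eq]; exact hQ0)
      have htl : t < len k m0 := lt_len hk (by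
        calc k ^ t ≤ Q * k ^ t := Nat.le_mul_of_pos_left _ (by omega)
          _ ≤ m0 := hm)
      rw [hlen]
      refine cnt_main hl hW (L := L) (by omega) e0 (by rw [hdt, eq]; exact hQk) htl.le ?_
      intro j h3 h4 ho
      exact hmax j (by omega) h4 (hup m m0 h1 h2 hm0 hm0' j h3 ho)
    · obtain ⟨e0, eq⟩ := hLo m h1 h
      -- all `t` lowest digits of `Q * k ^ t - 1` are `k - 1`, so its occurrence lies to their left
      obtain ⟨p0, pq⟩ := dg_lo hk (L := 0) (t := t) (m := Q * k ^ t - 1) (Q := Q) (by omega)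
        (by omega) (by simp; omega)
      have hp := hpos (Q * k ^ t - 1) (by omega) (by omega)
      rw [dseq_eq_cnt hk hw] at hp
      obtain ⟨j, hjT, hoj, -⟩ := exists_top hp
      have hjt1 : t ≤ j := by
        by_contra hc
        have := hoj 0 (by omega)
        rw [add_zero, hW 0 (by omega), p0 j (by omega) (by omega)] at this
        omega
      have hmono : len k (Q * k ^ t - 1) ≤ len k m0 := len_mono hk (by omega)
      have hjt2 : j = t := by
        by_contra hc
        exact hmax j (by omega) (by omega)
          (hup _ m0 (by omega) (by omega) hm0 hm0' j (by omega) hoj)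
      subst hjt2
      have hQ1 : Q - 1 ≠ 0 := by
        intro h0
        have : Q = 1 := by omega
        have h4 := len_le hk (m := Q * k ^ j - 1) (T := j) (by omega) (by subst this; omega)
        omega
      have hlen : len k m = len k (Q * k ^ j - 1) :=
        len_eq_of_div hk (eq.trans pq.symm) (by rw [eq]; exact hQ1)
      rw [hlen]
      refine cnt_other hl hW (by omega) ?_ ?_ hjT ?_
      · rw [e0 _ (by omega) (by omega)]
        omega
      · exact hoj.congr fun s h3 _ => dg_congr_div (eq.trans pq.symm) h3
      · intro j' h3 h4 ho
        exact hmax j' (by omega) (by omega) (hup m m0 h1 h2 hm0 hm0' j' h3 ho)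
  · obtain ⟨d0, dq⟩ := hLo m0 hm0 hm
    have hQ1 := mod_pred_ne hk hQ
    obtain ⟨htℓ, hW⟩ := pattern_const d0 (by rw [hdt, dq]; exact hQ1) hjt hLj hj ho0 ho1
    refine ⟨by omega, k - 1, Or.inr rfl, hW, fun m h1 h2 => ?_⟩
    have ha : pat w (w.length - 1) ≠ 0 := by rw [hW _ (by omega)]; omega
    -- leading zeros are invisible to `(k - 1) ^ |w|`, so one common length serves all members
    have hbound : i + n < k ^ (len k (i + n) + t) := (lt_pow_len hk _).trans_le
      (Nat.pow_le_pow_right (by omega) (by omega))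
    set Λ := len k (i + n) + t with hΛ
    have hs : ∀ m, m < i + n → dseq k w m = cnt k w.length (pat w) Λ m :=
      fun m hm => dseq_of_lead hk hw ha (by omega)
    have hno : ∀ m, i ≤ m → m < i + n → ∀ j, t < j → ¬ Occ k w.length (pat w) m j := by
      intro m a1 a2 j hj ho
      have ho' := hup m m0 a1 a2 hm0 hm0' j hj ho
      have h3 := ho' (w.length - 1) (by omega)
      have h4 := le_of_dg_ne hk (j := j + (w.length - 1)) (by rw [h3]; exact ha) (lt_pow_len hk m0)
      exact hmax j (by omega) (by omega) ho'
    rw [hs m h2]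
    rcases le_or_gt (Q * k ^ t) m with h | h
    · obtain ⟨e0, eq⟩ := hHi m h h2
      obtain ⟨p0, pq⟩ := dg_hi hk (L := 0) (t := t) (m := Q * k ^ t) (Q := Q) (by omega)
        (by omega) (by simp)
      have hp := hpos (Q * k ^ t) (by omega) (by omega)
      rw [hs _ hin] at hp
      obtain ⟨j, hjT, hoj, -⟩ := exists_top hp
      have hjt1 : t ≤ j := by
        by_contra hc
        have := hoj 0 (by omega)
        rw [add_zero, hW 0 (by omega), p0 j (by omega) (by omega)] at this
        omega
      have hjt2 : j = t := by
        by_contra hc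
        exact hno _ (by omega) hin j (by omega) hoj
      subst hjt2
      refine cnt_other hl hW (by omega) ?_ ?_ hjT fun j' h3 _ => hno m h1 h2 j' h3
      · rw [e0 _ (by omega) (by omega)]
        omega
      · exact hoj.congr fun s h3 _ => dg_congr_div (eq.trans pq.symm) h3
    · obtain ⟨e0, eq⟩ := hLo m h1 h
      exact cnt_main hl hW (L := L) (by omega) e0 (by rw [hdt, eq]; exact hQ1) (by omega)
        fun j' h3 _ => hno m h1 h2 j' h3

/-- A factor of length `n ≤ k ^ L` with positive letters, one of them at least `L + 2`, stays a factor
when all its letters are lowered by one. Take the leftmost occurrence in the member with the large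
value: if the interval has no carry at its weight, the words are cut just inside this common
leftmost occurrence; otherwise `w` is a power of `0` or `k - 1` and the run is shortened. -/
theorem backward {k : ℕ} (hk : 2 ≤ k) {w : List ℕ} (hw : w ≠ []) (hne : ¬ (k = 2 ∧ w = [1]))
    {L i n : ℕ} (hn : n ≤ k ^ L) (hpos : ∀ j < n, 1 ≤ dseq k w (i + j))
    (hbig : ∃ j < n, L + 2 ≤ dseq k w (i + j)) :
    ∃ i', ∀ j < n, dseq k w (i + j) = dseq k w (i' + j) + 1 := by
  have hl : 1 ≤ w.length := List.length_pos_iff.2 hw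
  obtain ⟨jj, hjj, hb⟩ := hbig
  rw [dseq_eq_cnt hk hw] at hb
  obtain ⟨j0, hj0T, ho0, hmax⟩ := exists_top (show 1 ≤ _ by omega) (T := len k (i + jj))
    (k := k) (ℓ := w.length) (W := pat w) (m := i + jj)
  have htop := cnt_top hl hj0T ho0 hmax
  obtain ⟨j1, hLj, hj1, ho1⟩ := exists_ge hl
    (show L + 1 ≤ cnt k w.length (pat w) (j0 + w.length - 1) (i + jj) by omega)
  have hm0 : i + jj ≠ 0 := by
    intro h0
    have := cnt_le k w.length (pat w) (len k (i + jj)) (i + jj)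
    rw [h0, len_zero] at this
    rw [h0, len_zero] at hb
    omega
  by_cases hc : ∀ j < n, (i + j) / k ^ j0 = (i + jj) / k ^ j0
  · have h0 : (i + jj) / k ^ j0 ≠ 0 :=
      (Nat.div_pos (pow_le_of_lt_len hk hm0 (by omega)) (by positivity)).ne'
    obtain ⟨i', hi'⟩ := realize hk hw (T := j0 + w.length - 1) (i := i) (n := n) (by
      intro j hj
      obtain ⟨s, hs⟩ : ∃ s, j0 + w.length - 1 = j0 + s := ⟨w.length - 1, by omega⟩
      rw [hs, pow_add, ← Nat.div_div_eq_div_mul, ← Nat.div_div_eq_div_mul, hc j hj,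
        ← hc 0 (by omega), add_zero])
    refine ⟨i', fun j hj => ?_⟩
    rw [hi' j hj, dseq_eq_cnt hk hw]
    have hlen : len k (i + j) = len k (i + jj) :=
      len_eq_of_div hk (hc j hj) (by rw [hc j hj]; exact h0)
    rw [hlen]
    refine cnt_top hl hj0T ?_ fun j' h1 h2 ho => ?_
    · exact ho0.congr fun s h1 _ => dg_congr_div (hc j hj) h1
    · exact hmax j' h1 h2 (ho.congr fun s h3 _ => dg_congr_div (hc j hj).symm (by omega))
  · -- the interval contains, not as its first element, a multiple of `k ^ j0`
    have hcr : ∃ M, k ^ j0 ∣ M ∧ i < M ∧ M < i + n := by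
      have hp : 0 < k ^ j0 := by positivity
      obtain ⟨j, hj, hd⟩ : ∃ j < n, (i + j) / k ^ j0 ≠ i / k ^ j0 := by
        by_contra hcon
        push Not at hcon
        exact hc fun j hj => (hcon j hj).trans (hcon jj hjj).symm
      have h1 : i / k ^ j0 < (i + j) / k ^ j0 :=
        lt_of_le_of_ne (Nat.div_le_div_right (by omega)) hd.symm
      refine ⟨(i / k ^ j0 + 1) * k ^ j0, Dvd.intro_left _ rfl, ?_, ?_⟩
      · exact (Nat.div_lt_iff_lt_mul hp).1 (by omega)
      · have := (Nat.le_div_iff_mul_le hp).1 (show i / k ^ j0 + 1 ≤ (i + j) / k ^ j0 by omega)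
        omega
    obtain ⟨M, hdvd, hiM, hMn⟩ := hcr
    obtain ⟨t, Q, hQ, rfl⟩ := Nat.exists_eq_pow_mul_and_not_dvd (show M ≠ 0 by omega) k (by omega)
    have hjt : j0 ≤ t := by
      by_contra hlt
      apply hQ
      have h1 : k ^ (t + 1) ∣ k ^ t * Q := (pow_dvd_pow k (by omega)).trans hdvd
      rw [pow_succ] at h1
      exact Nat.dvd_of_mul_dvd_mul_left (by positivity) h1
    rw [mul_comm] at hiM hMn
    obtain ⟨hLt, f, hf, hW, hs⟩ := backward_cross hk hw hn hQ hiM hMn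
      (fun m h1 h2 => by
        obtain ⟨j, rfl⟩ := Nat.exists_eq_add_of_le h1
        exact hpos j (by omega))
      (show i ≤ i + jj by omega) (by omega) ho0 hmax hLj (by omega) ho1 hjt
    have hne' : ¬ (k = 2 ∧ w.length = 1 ∧ f = 1) := by
      rintro ⟨h1, h2, h3⟩
      obtain ⟨a, rfl⟩ := List.length_eq_one_iff.1 h2
      have := hW 0 (by simp)
      simp [pat, h3] at this
      exact hne ⟨h1, by rw [this]⟩
    obtain ⟨i', hi'⟩ := realize_cross hk hw hf hW hne' (T := t - 1) (L := L) (i := i) (n := n)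
      (M := Q * k ^ t) (by omega) hn (Dvd.dvd.mul_left (pow_dvd_pow k (by omega)) Q) hiM hMn
    exact ⟨i', fun j hj => by rw [hi' j hj, hs _ (by omega) (by omega)]⟩

/-! ### Factor sets -/

lemma mem_factorSet1 {a : ℕ → ℕ} {n N : ℕ} (hN : 1 ≤ N) {u : List ℕ} :
    u ∈ factorSet1 a n N ↔
      (∃ i, u = (List.range n).map fun j => a (i + j)) ∧ (∀ x ∈ u, x ≤ N) ∧ ∃ x ∈ u, N ≤ x := by
  unfold factorSet1 factorSet
  simp only [Set.mem_sdiff, Set.mem_ofPred_eq, not_and, not_forall]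
  constructor
  · rintro ⟨⟨h1, h2⟩, h3⟩
    obtain ⟨x, hx, h4⟩ := h3 h1
    exact ⟨h1, h2, x, hx, by omega⟩
  · rintro ⟨h1, h2, x, hx, h4⟩
    exact ⟨⟨h1, h2⟩, fun _ => ⟨x, hx, by omega⟩⟩

theorem stmt10 (k : ℕ) (hk : 2 ≤ k) (w : List ℕ) (hw : w ≠ []) (hwk : ∀ d ∈ w, d < k)
    (hne : ¬ (k = 2 ∧ w = [1])) (n : ℕ) (hn : 1 ≤ n) (u : List ℕ) (hu : u.length = n)
    (N : ℕ) (hN : Nat.clog k n + 1 ≤ N) :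
    u ∈ factorSet1 (dseq k w) n N ↔
      u.map (· + 1) ∈ factorSet1 (dseq k w) n (N + 1) := by
  have hnL : n ≤ k ^ Nat.clog k n := Nat.le_pow_clog (by omega) n
  rw [mem_factorSet1 (by omega), mem_factorSet1 (by omega)]
  simp only [List.mem_map, forall_exists_index, and_imp, forall_apply_eq_imp_iff₂,
    exists_exists_and_eq_and, add_le_add_iff_right]
  refine and_congr_left fun ⟨_, x, hx, hxN⟩ => ⟨?_, ?_⟩
  · rintro ⟨i, rfl⟩
    obtain ⟨j, hj, rfl⟩ := List.mem_map.1 hx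
    obtain ⟨i', hi'⟩ := forward hk hw hwk hnL ⟨j, List.mem_range.1 hj, hN.trans hxN⟩
    refine ⟨i', ?_⟩
    rw [List.map_map]
    exact List.map_congr_left fun j hj => (hi' j (List.mem_range.1 hj)).symm
  · rintro ⟨i, hi⟩
    have hget : ∀ j (hj : j < n), u[j] + 1 = dseq k w (i + j) := by
      intro j hj
      have := congrArg (fun l => l[j]?) hi
      simpa [hj, hu] using this
    obtain ⟨j, hj, rfl⟩ := List.getElem_of_mem hx
    obtain ⟨i', hi'⟩ := backward (i := i) hk hw hne hnL
      (fun j hj => by rw [← hget j hj]; omega)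
      ⟨j, by omega, by rw [← hget j (by omega)]; omega⟩
    refine ⟨i', List.ext_getElem (by simp [hu]) fun j h1 h2 => ?_⟩
    have h3 := hget j (by omega)
    rw [hi' j (by omega)] at h3
    simpa using h3
end

section
/- Let k ≥ 2 and let w be a nonempty word over Σ_k with (k,w) ≠ (2,1), and let s = s_{k,w}. Let m and n be positive integers, and let x be the longest common prefix of the words (m)_k, (m+1)_k, …, (m+n−1)_k. If w occurs as a factor of x, then there exists m′ ∈ ℕ such that s(m′+i) = s(m+i) − 1 for all 0 ≤ i ≤ n−1. -/
lemma occ_cons (w : List ℕ) (a : ℕ) (l : List ℕ) :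
    occ w (a :: l) = (if w <+: a :: l then 1 else 0) + occ w l := by
  unfold occ
  rw [List.length_cons, List.range_succ_eq_map, List.filter_cons]
  have h : (List.filter (fun i => w.isPrefixOf ((a :: l).drop i))
      (List.map Nat.succ (List.range l.length))).length
      = (List.filter (fun i => w.isPrefixOf (l.drop i)) (List.range l.length)).length := by
    rw [List.filter_map, List.length_map]
    rfl
  by_cases hp : w <+: a :: l
  · have hp2 : w.isPrefixOf (a :: l) = true := List.isPrefixOf_iff_prefix.2 hp
    simp only [List.drop_zero, hp2, hp, if_true, List.length_cons, h]
    omega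
  · have hp2 : ¬ (w.isPrefixOf (a :: l) = true) := fun h => hp (List.isPrefixOf_iff_prefix.1 h)
    simp only [List.drop_zero, hp2, hp, if_false]
    simpa using h

lemma occ_cons_of_ne {a b : ℕ} (h : b ≠ a) (v l : List ℕ) :
    occ (b :: v) (a :: l) = occ (b :: v) l := by
  rw [occ_cons, if_neg, zero_add]
  intro hp
  exact h (List.cons_prefix_cons.1 hp).1

/-- `P` ends with the first letter of the leftmost occurrence of `w` in `x`. -/
lemma exists_split (w : List ℕ) (hw : w ≠ []) (x : List ℕ) (h : w <:+: x) :
    ∃ P y, x = P ++ y ∧ ∀ u, occ w (x ++ u) = occ w (y ++ u) + 1 := by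
  induction x with
  | nil => exact absurd (List.infix_nil.1 h) hw
  | cons a x ih =>
    by_cases hp : w <+: a :: x
    · refine ⟨[a], x, rfl, fun u => ?_⟩
      have : w <+: a :: (x ++ u) := hp.trans ⟨u, rfl⟩
      rw [List.cons_append, occ_cons, if_pos this, add_comm]
    · have hx : w <:+: x := (List.infix_cons_iff.1 h).resolve_left hp
      obtain ⟨P, y, rfl, hy⟩ := ih hx
      refine ⟨a :: P, y, rfl, fun u => ?_⟩
      have : ¬ w <+: a :: (P ++ y ++ u) := by
        intro h2
        -- `w` is no longer than `P ++ y`, so such a prefix would already lie inside `a :: (P ++ y)`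
        apply hp
        refine List.prefix_of_prefix_length_le h2 (l₂ := a :: (P ++ y)) ⟨u, rfl⟩ ?_
        have := hx.length_le
        simp only [List.length_cons]
        omega
      rw [List.cons_append, occ_cons, if_neg this, zero_add, hy]

lemma rep_ofDigits {k : ℕ} (hk : 2 ≤ k) (a : ℕ) (z : List ℕ) (ha : a ≠ 0)
    (hz : ∀ d ∈ a :: z, d < k) : rep k (Nat.ofDigits k (a :: z).reverse) = a :: z := by
  have hd : Nat.digits k (Nat.ofDigits k (a :: z).reverse) = (a :: z).reverse := by
    apply Nat.digits_ofDigits k (by omega)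
    · intro d hd
      exact hz d (List.mem_reverse.1 hd)
    · intro _
      simpa using ha
  unfold rep
  rw [if_neg, hd, List.reverse_reverse]
  intro h0
  rw [h0] at hd
  simp at hd

/-- Leading zeros are invisible to a word whose first letter is nonzero. -/
lemma occ_rep_ofDigits {k : ℕ} (hk : 2 ≤ k) {b : ℕ} (hb : b ≠ 0) (v z : List ℕ)
    (hz : ∀ d ∈ z, d < k) :
    occ (b :: v) (rep k (Nat.ofDigits k z.reverse)) = occ (b :: v) z := by
  induction z with
  | nil => simp [rep, occ_cons_of_ne hb]
  | cons a z ih =>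
    by_cases ha : a = 0
    · subst ha
      rw [occ_cons_of_ne hb, ← ih (fun d hd => hz d (List.mem_cons_of_mem _ hd))]
      simp [Nat.ofDigits_append]
    · rw [rep_ofDigits hk a z ha hz]

/-- If the representations of `m, …, m + n - 1` have a common prefix containing a nonempty `w`, they
all have the same length, unless `k = 2` and `w = 1` (as for `11` and `100` in base `2`). -/
lemma rep_length_eq {k : ℕ} (hk : 2 ≤ k) {w : List ℕ} (hw : w ≠ [])
    (hne : ¬ (k = 2 ∧ w = [1])) {m n : ℕ} (hm : 0 < m) {x : List ℕ}
    (hpre : ∀ i < n, x <+: rep k (m + i)) (hwx : w <:+: x) {i : ℕ} (hi : i < n) :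
    (rep k (m + i)).length = (rep k m).length := by
  have hrep : ∀ j, rep k (m + j) = (Nat.digits k (m + j)).reverse := fun j => by
    rw [rep, if_neg (by omega)]
  have hrep0 := hrep 0
  rw [add_zero] at hrep0
  rw [hrep, hrep0, List.length_reverse, List.length_reverse]
  by_contra hlen
  have hle : (Nat.digits k m).length ≤ (Nat.digits k (m + i)).length :=
    Nat.le_length_digits_le k m (m + i) (by omega)
  obtain ⟨l, hl⟩ : ∃ l, (Nat.digits k m).length = l := ⟨_, rfl⟩
  have h1 : m < k ^ l := hl ▸ Nat.lt_base_pow_length_digits (by omega)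
  have h2 : k ^ l ≤ m + i := by
    by_contra hc
    have := (Nat.digits_length_le_iff (by omega) (m + i)).2 (not_le.1 hc)
    omega
  obtain ⟨j, hj⟩ : ∃ j, m + j + 1 = k ^ l := ⟨k ^ l - 1 - m, by omega⟩
  have hp1 := hpre j (by omega)
  have hp2 := hpre (j + 1) (by omega)
  have hl0 : l ≠ 0 := by
    rintro rfl
    rw [pow_zero] at h1
    omega
  have hr2 : rep k (m + (j + 1)) = 1 :: List.replicate l 0 := by
    have := rep_ofDigits hk 1 (List.replicate l 0) one_ne_zero (by
      intro d hd
      rcases List.mem_cons.1 hd with rfl | hd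
      · omega
      · rw [List.eq_of_mem_replicate hd]
        omega)
    rw [← this, List.reverse_cons, Nat.ofDigits_append, List.reverse_replicate,
      Nat.ofDigits_replicate_zero, List.length_replicate, Nat.ofDigits_singleton, ← add_assoc, hj]
    simp
  obtain ⟨c, x', rfl⟩ : ∃ c x', x = c :: x' := by
    cases x with
    | nil => exact absurd (List.infix_nil.1 hwx) hw
    | cons c x' => exact ⟨c, x', rfl⟩
  have hr1 : rep k (m + j) = List.replicate l (k - 1) := by
    have h3 : Nat.ofDigits k (List.replicate l (k - 1)) + 1 = k ^ l := by
      clear * - hk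
      induction l with
      | zero => simp
      | succ l ih =>
        rw [List.replicate_succ, Nat.ofDigits_cons, pow_succ, ← ih]
        obtain ⟨t, rfl⟩ : ∃ t, k = t + 1 := ⟨k - 1, by omega⟩
        simp
        ring
    obtain ⟨l, rfl⟩ := Nat.exists_eq_succ_of_ne_zero hl0
    have := rep_ofDigits hk (k - 1) (List.replicate l (k - 1)) (by omega) (by
      intro d hd
      rw [← List.replicate_succ] at hd
      rw [List.eq_of_mem_replicate hd]
      omega)
    rw [← List.replicate_succ, List.reverse_replicate] at this
    rw [← this]
    congr 1
    simp only [Nat.succ_eq_add_one] at *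
    omega
  rw [hr2, List.cons_prefix_cons] at hp2
  rw [hr1] at hp1
  obtain ⟨rfl, hp2⟩ := hp2
  have hk1 : 1 = k - 1 := List.eq_of_mem_replicate (hp1.subset (by simp))
  -- letters of `x'` are `0` in the representation of `k ^ l`, but `k - 1` in that of `k ^ l - 1`
  have hx' : x' = [] := by
    rw [List.eq_nil_iff_forall_not_mem]
    intro d hd
    have e1 := List.eq_of_mem_replicate (hp1.subset (List.mem_cons_of_mem _ hd))
    have e2 := List.eq_of_mem_replicate (hp2.subset hd)
    omega
  subst hx'
  refine hne ⟨by omega, ?_⟩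
  have h4 := hwx.length_le
  have h5 : 0 < w.length := List.length_pos_iff.2 hw
  exact hwx.eq_of_length (by simp only [List.length_cons, List.length_nil] at *; omega)

theorem stmt11 (k : ℕ) (hk : 2 ≤ k) (w : List ℕ) (hw : w ≠ []) (hwk : ∀ d ∈ w, d < k)
    (hne : ¬ (k = 2 ∧ w = [1])) (m n : ℕ) (hm : 0 < m) (hn : 0 < n)
    (x : List ℕ) (hpre : ∀ i < n, x <+: rep k (m + i))
    (hmax : ∀ y : List ℕ, (∀ i < n, y <+: rep k (m + i)) → y.length ≤ x.length)
    (hwx : w <:+: x) :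
    ∃ m' : ℕ, ∀ i < n, dseq k w (m' + i) + 1 = dseq k w (m + i) := by
  obtain ⟨P, y, rfl, hocc⟩ := exists_split w hw x hwx
  obtain ⟨T, hT⟩ : ∃ T, T = (rep k m).length - P.length := ⟨_, rfl⟩
  obtain ⟨A, hA⟩ : ∃ A, A = Nat.ofDigits k P.reverse := ⟨_, rfl⟩
  -- `z` is the representation of `m + i` with the prefix `P` deleted
  have key : ∀ i < n, ∃ z : List ℕ, (∀ d ∈ z, d < k) ∧ z.length = T ∧
      m + i = Nat.ofDigits k z.reverse + k ^ T * A ∧ dseq k w (m + i) = occ w z + 1 := by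
    intro i hi
    obtain ⟨u, hu⟩ := hpre i hi
    have hlen := rep_length_eq hk hw hne hm hpre hwx hi
    have hrep : rep k (m + i) = (Nat.digits k (m + i)).reverse := by
      rw [rep, if_neg (by omega)]
    have hdig : Nat.digits k (m + i) = (y ++ u).reverse ++ P.reverse := by
      rw [← List.reverse_append, ← List.append_assoc, hu, hrep, List.reverse_reverse]
    have hzT : (y ++ u).length = T := by
      rw [← hu] at hlen
      simp only [List.length_append] at hlen ⊢
      omega
    refine ⟨y ++ u, ?_, hzT, ?_, ?_⟩
    · intro d hd
      apply Nat.digits_lt_base (b := k) (m := m + i) (by omega)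
      rw [hdig]
      exact List.mem_append_left _ (List.mem_reverse.2 hd)
    · conv_lhs => rw [← Nat.ofDigits_digits k (m + i), hdig]
      rw [Nat.ofDigits_append, List.length_reverse, hzT, hA]
    · rw [dseq, ← hu, hocc]
  obtain ⟨z₀, -, -, h₀, -⟩ := key 0 hn
  obtain ⟨b, v, rfl⟩ := List.exists_cons_of_ne_nil hw
  by_cases hb : b = 0
  · refine ⟨m - k ^ T * A + k ^ T, fun i hi => ?_⟩
    obtain ⟨z, hz, hzT, hzm, hzo⟩ := key i hi
    have hval : m - k ^ T * A + k ^ T + i = Nat.ofDigits k (1 :: z).reverse := by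
      rw [List.reverse_cons, Nat.ofDigits_append, List.length_reverse, hzT,
        Nat.ofDigits_singleton, mul_one]
      omega
    rw [hzo, dseq, hval, rep_ofDigits hk 1 z one_ne_zero, occ_cons_of_ne (by omega)]
    intro d hd
    rcases List.mem_cons.1 hd with rfl | hd
    · omega
    · exact hz d hd
  · refine ⟨m - k ^ T * A, fun i hi => ?_⟩
    obtain ⟨z, hz, hzT, hzm, hzo⟩ := key i hi
    have hval : m - k ^ T * A + i = Nat.ofDigits k z.reverse := by omega
    rw [hzo, dseq, hval, occ_rep_ofDigits hk hb v z hz]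
end

section
/- Let k ≥ 2, q ≥ 1 and let w = 0^q (the word of q zeros), and let s = s_{k,w}. Let N ≥ 0 and let n ≥ 1 be an integer with n ≤ k^{N−2}. Then for all integers m > 0 satisfying s(m+1) ≥ N, one has s(m+i) > 0 for all 1 ≤ i ≤ n. -/
theorem digits_drop_eq (k : ℕ) (hk : 2 ≤ k) (e n : ℕ) :
    (Nat.digits k n).drop e = Nat.digits k (n / k ^ e) := by
  induction e generalizing n with
  | zero => simp
  | succ e ih =>
    rcases Nat.eq_zero_or_pos n with rfl | hn
    · simp
    · rw [Nat.digits_def' (by omega) hn, List.drop_succ_cons, ih, Nat.div_div_eq_div_mul, pow_succ']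

/-- A zero digit of weight `k ^ p` absorbs the carry when a number below `k ^ p` is added. -/
theorem add_div_pow_eq (k M j p : ℕ) (hk : 2 ≤ k) (h0 : M / k ^ p % k = 0) (hj : j < k ^ p) :
    (M + j) / k ^ (p + 1) = M / k ^ (p + 1) := by
  have hpos : 0 < k ^ p := by positivity
  have h1 : M = k ^ p * (M / k ^ p) + M % k ^ p := (Nat.div_add_mod _ _).symm
  have h2 : M / k ^ p = k * (M / k ^ p / k) := by
    have := Nat.div_add_mod (M / k ^ p) k
    omega
  have h3 : M % k ^ p < k ^ p := Nat.mod_lt _ hpos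
  rw [Nat.div_div_eq_div_mul, ← pow_succ] at h2
  have h4 : M + j = k ^ (p + 1) * (M / k ^ (p + 1)) + (M % k ^ p + j) := by
    rw [pow_succ, mul_assoc, ← pow_succ, ← h2]
    omega
  have h5 : M % k ^ p + j < k ^ (p + 1) := by
    have : k ^ p * 2 ≤ k ^ p * k := Nat.mul_le_mul_left _ hk
    rw [pow_succ]
    omega
  rw [h4, Nat.mul_add_div (by positivity), Nat.div_eq_of_lt h5, add_zero]

theorem occ_pos_of_infix (w y : List ℕ) (hw : w ≠ []) (h : w <:+: y) : 0 < occ w y := by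
  obtain ⟨s, t, rfl⟩ := h
  refine List.length_pos_of_mem (a := s.length) (List.mem_filter.2 ⟨?_, ?_⟩)
  · have := List.length_pos_iff.2 hw
    simp
    omega
  · simp

/-- Of `N ≥ 2` occurrences of `w` in `y`, two end before the last `N - 2` letters of `y`. -/
theorem exists_two_occurrences (w y : List ℕ) (N : ℕ) (hN : 2 ≤ N) (h : N ≤ occ w y) :
    ∃ a b, a < b ∧ b + w.length + (N - 2) ≤ y.length ∧ w <+: y.drop a ∧ w <+: y.drop b := by
  classical
  set S : Finset ℕ := (Finset.range y.length).filter (fun i => w <+: y.drop i) with hS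
  have hcard : N ≤ S.card := by
    have h1 : S = ((List.range y.length).filter (fun i => w.isPrefixOf (y.drop i))).toFinset := by
      ext i
      simp [hS]
    rw [h1, List.toFinset_card_of_nodup (List.nodup_range.filter _)]
    exact h
  -- Starting positions of occurrences which end among the last `N - 2` letters.
  set T : Finset ℕ := Finset.Ico (y.length + 1 - w.length - (N - 2)) (y.length + 1 - w.length)
  have hT : T.card ≤ N - 2 := by
    simp only [T, Nat.card_Ico]
    omega
  have hST : 1 < (S \ T).card := by
    have := Finset.le_card_sdiff T S
    omega
  have key : ∀ x ∈ S \ T, x + w.length + (N - 2) ≤ y.length ∧ w <+: y.drop x := by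
    intro x hx
    simp only [T, hS, Finset.mem_sdiff, Finset.mem_filter, Finset.mem_range, Finset.mem_Ico] at hx
    obtain ⟨⟨h1, h2⟩, h3⟩ := hx
    have := h2.length_le
    rw [List.length_drop] at this
    exact ⟨by omega, h2⟩
  obtain ⟨a, ha, b, hb, hab⟩ := Finset.one_lt_card.1 hST
  rcases lt_or_gt_of_ne hab with hlt | hlt
  · exact ⟨a, b, hlt, (key b hb).1, (key a ha).2, (key b hb).2⟩
  · exact ⟨b, a, hlt, (key a ha).1, (key b hb).2, (key a ha).2⟩

theorem stmt12 (k q : ℕ) (hk : 2 ≤ k) (hq : 1 ≤ q) (N n : ℕ) (hn : 1 ≤ n)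
    (hnN : (n : ℝ) ≤ (k : ℝ) ^ ((N : ℤ) - 2)) (m : ℕ) (hm : 0 < m)
    (hs : N ≤ dseq k (List.replicate q 0) (m + 1)) :
    ∀ i, 1 ≤ i → i ≤ n → 0 < dseq k (List.replicate q 0) (m + i) := by
  intro i hi hin
  have hN : 2 ≤ N := by
    by_contra hlt
    have h1 : (k : ℝ) ^ ((N : ℤ) - 2) < 1 :=
      zpow_lt_one_of_neg₀ (by exact_mod_cast (by omega : 1 < k)) (by omega)
    have h2 : (1 : ℝ) ≤ n := by exact_mod_cast hn
    linarith
  have hnk : n ≤ k ^ (N - 2) := by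
    have h1 : ((N : ℤ) - 2) = ((N - 2 : ℕ) : ℤ) := by omega
    rw [h1, zpow_natCast] at hnN
    exact_mod_cast hnN
  obtain ⟨j, rfl⟩ : ∃ j, i = j + 1 := ⟨i - 1, by omega⟩
  rw [show m + (j + 1) = (m + 1) + j by ring]
  generalize hM : m + 1 = M at *
  unfold dseq rep at hs ⊢
  rw [if_neg (by omega)] at hs ⊢
  obtain ⟨a, b, hab, hb, hwa, hwb⟩ := exists_two_occurrences _ _ N hN hs
  rw [List.length_replicate, List.length_reverse] at hb
  set d := Nat.digits k M with hd
  -- The last zero of the occurrence starting at `b` has weight `k ^ p`.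
  obtain ⟨p, hp⟩ : ∃ p, d.length = p + (b + q) := ⟨d.length - (b + q), by omega⟩
  have hzero : M / k ^ p % k = 0 := by
    rw [← Nat.getD_digits M p hk, ← hd]
    have h1 := hwb.getElem (i := q - 1) (by simp; omega)
    rw [List.getElem_replicate, List.getElem_drop, List.getElem_reverse] at h1
    rw [List.getD_eq_getElem _ _ (by omega), h1]
    congr 1
    omega
  have hj : j < k ^ p :=
    lt_of_lt_of_le (by omega) (Nat.pow_le_pow_right (by omega) (by omega : N - 2 ≤ p))
  have hdrop : (Nat.digits k (M + j)).drop (p + 1) = d.drop (p + 1) := by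
    rw [digits_drop_eq k hk, add_div_pow_eq k M j p hk hzero hj, hd, digits_drop_eq k hk]
  apply occ_pos_of_infix
  · simp
    omega
  · have h1 : List.replicate q 0 <+: (d.reverse.take (b + q - 1)).drop a := by
      rw [List.drop_take, List.prefix_take_iff]
      exact ⟨hwa, by simp; omega⟩
    have h2 : d.reverse.take (b + q - 1) = ((Nat.digits k (M + j)).drop (p + 1)).reverse := by
      rw [hdrop, List.take_reverse]
      congr 2
      omega
    rw [h2] at h1
    exact (h1.isInfix.trans (List.drop_suffix _ _).isInfix).trans
      (List.reverse_infix.2 (List.drop_suffix _ _).isInfix)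
end

section
/- Let k ≥ 2, q ≥ 1 and let w = (k−1)^q (the word consisting of q copies of the digit k−1), and let s = s_{k,w}. Let N ≥ 0 and let n ≥ 1 be an integer with n ≤ k^{N−2}. Then for all integers m > 0 satisfying s(m) ≥ N, one has s(m−i) > 0 for all 0 ≤ i ≤ n−1. -/
/-- The word `(k-1)^q` occurs in the base-`k` expansion of `m` with its least significant digit at
position `p`, positions being counted from the least significant digit. -/
def Hit (k q m p : ℕ) : Prop := ∀ t < q, m / k ^ (p + t) % k = k - 1

lemma isPrefixOf_iff (k q : ℕ) (hk : 2 ≤ k) (m j : ℕ) :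
    (List.replicate q (k - 1)).isPrefixOf ((Nat.digits k m).reverse.drop j) = true ↔
      j + q ≤ max j (Nat.digits k m).length ∧ Hit k q m ((Nat.digits k m).length - q - j) := by
  rw [List.isPrefixOf_iff_prefix, List.prefix_iff_getElem]
  constructor
  · rintro ⟨hl, h⟩
    simp only [List.length_replicate, List.length_drop, List.length_reverse] at hl h
    refine ⟨by omega, fun t ht => ?_⟩
    have h1 := h (q - 1 - t) (by omega)
    rw [List.getElem_replicate, List.getElem_drop, List.getElem_reverse] at h1
    rw [← Nat.getD_digits m _ hk, h1, List.getD_eq_getElem _ _ (by omega)]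
    congr 1
    omega
  · rintro ⟨hl, h⟩
    have hl' : (List.replicate q (k - 1)).length ≤
        ((Nat.digits k m).reverse.drop j).length := by
      simp only [List.length_replicate, List.length_drop, List.length_reverse]
      omega
    refine ⟨hl', fun t ht => ?_⟩
    simp only [List.length_replicate] at ht
    have h1 := h (q - 1 - t) (by omega)
    rw [← Nat.getD_digits m _ hk, List.getD_eq_getElem _ _ (by omega)] at h1
    rw [List.getElem_replicate, List.getElem_drop, List.getElem_reverse]
    refine h1.symm.trans ?_
    congr 1
    omega

/-- Digits beyond the length of the expansion are `0 ≠ k - 1`, so an occurrence lies within it. -/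
lemma Hit.add_le {k q m p : ℕ} (hk : 2 ≤ k) (hq : 1 ≤ q) (h : Hit k q m p) :
    p + q ≤ (Nat.digits k m).length := by
  by_contra hlt
  have h1 := h (q - 1) (by omega)
  rw [← Nat.getD_digits m _ hk, List.getD_eq_default _ _ (by omega)] at h1
  omega

open Classical in
lemma dseq_eq_card (k q : ℕ) (hk : 2 ≤ k) (hq : 1 ≤ q) (m : ℕ) (hm : 0 < m) :
    dseq k (List.replicate q (k - 1)) m =
      ((Finset.range (Nat.digits k m).length).filter (Hit k q m)).card := by
  have h0 : dseq k (List.replicate q (k - 1)) m =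
      ((Finset.range (Nat.digits k m).length).filter (fun i =>
        (List.replicate q (k - 1)).isPrefixOf ((Nat.digits k m).reverse.drop i) = true)).card := by
    unfold dseq occ rep
    rw [if_neg hm.ne', List.length_reverse, ← List.toFinset_range, ← List.toFinset_filter,
      List.toFinset_card_of_nodup (List.nodup_range.filter _)]
  rw [h0]
  -- A starting index `j` from the left corresponds to the position `L - q - j` from the right.
  refine Finset.card_bij' (fun j _ => (Nat.digits k m).length - q - j)
    (fun p _ => (Nat.digits k m).length - q - p) ?_ ?_ ?_ ?_
  · intro j hj
    rw [Finset.mem_filter, Finset.mem_range, isPrefixOf_iff k q hk] at hj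
    rw [Finset.mem_filter, Finset.mem_range]
    exact ⟨by omega, hj.2.2⟩
  · intro p hp
    rw [Finset.mem_filter, Finset.mem_range] at hp
    have := hp.2.add_le hk hq
    rw [Finset.mem_filter, Finset.mem_range, isPrefixOf_iff k q hk]
    refine ⟨by omega, by omega, ?_⟩
    have e : (Nat.digits k m).length - q - ((Nat.digits k m).length - q - p) = p := by omega
    rw [e]
    exact hp.2
  · intro j hj
    rw [Finset.mem_filter, Finset.mem_range, isPrefixOf_iff k q hk] at hj
    omega
  · intro p hp
    rw [Finset.mem_filter, Finset.mem_range] at hp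
    have := hp.2.add_le hk hq
    omega

/-- The second highest of `N ≥ 2` distinct positions is at least `N - 2`. -/
lemma exists_two_hits (S : Finset ℕ) (N : ℕ) (hN : 2 ≤ N) (hS : N ≤ S.card) :
    ∃ p ∈ S, ∃ P ∈ S, p < P ∧ N - 2 ≤ p := by
  have hne : S.Nonempty := Finset.card_pos.mp (by omega)
  have hPm := S.max'_mem hne
  set P := S.max' hne with hP
  have hc := Finset.card_erase_of_mem hPm
  have hne' : (S.erase P).Nonempty := Finset.card_pos.mp (by omega)
  have hpm := (S.erase P).max'_mem hne'
  set p := (S.erase P).max' hne' with hp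
  rw [Finset.mem_erase] at hpm
  refine ⟨p, hpm.2, P, hPm, lt_of_le_of_ne (S.le_max' p hpm.2) hpm.1, ?_⟩
  have hsub : S.erase P ⊆ Finset.range (p + 1) := fun x hx =>
    Finset.mem_range.mpr (Nat.lt_succ_of_le ((S.erase P).le_max' x hx))
  have := Finset.card_le_card hsub
  rw [Finset.card_range] at this
  omega

/-- A nonzero digit at a position `p < P` makes the part of `m` below position `P` at least
`k ^ p`. -/
lemma pow_le_mod {k m p P : ℕ} (hpP : p < P) (h : m / k ^ p % k ≠ 0) :
    k ^ p ≤ m % k ^ P := by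
  by_contra! hlt
  apply h
  have hd : k ^ (p + 1) ∣ k ^ P := pow_dvd_pow k hpP
  rw [← Nat.mod_mul_right_div_self, ← pow_succ, ← Nat.mod_mod_of_dvd m hd]
  exact Nat.div_eq_of_lt (lt_of_le_of_lt (Nat.mod_le _ _) hlt)

/-- Subtracting a number not exceeding the part of `m` below position `P` causes no borrow at or
above `P`. -/
lemma hit_sub {k q m P i : ℕ} (hk : 2 ≤ k) (h : Hit k q m P) (hi : i ≤ m % k ^ P) :
    Hit k q (m - i) P := by
  have e : (m - i) / k ^ P = m / k ^ P := by
    have hpos : 0 < k ^ P := by positivity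
    have h1 := Nat.div_add_mod m (k ^ P)
    have h2 := Nat.mod_lt m hpos
    have h3 : m - i = (m % k ^ P - i) + k ^ P * (m / k ^ P) := by omega
    rw [h3, Nat.add_mul_div_left _ _ hpos, Nat.div_eq_of_lt (by omega), zero_add]
  intro t ht
  rw [pow_add, ← Nat.div_div_eq_div_mul, e, Nat.div_div_eq_div_mul, ← pow_add]
  exact h t ht

theorem stmt13 (k q : ℕ) (hk : 2 ≤ k) (hq : 1 ≤ q) (N n : ℕ) (hn : 1 ≤ n)
    (hnN : (n : ℝ) ≤ (k : ℝ) ^ ((N : ℤ) - 2)) (m : ℕ) (hm : 0 < m)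
    (hs : N ≤ dseq k (List.replicate q (k - 1)) m) :
    ∀ i, i ≤ n - 1 → 0 < dseq k (List.replicate q (k - 1)) (m - i) := by
  classical
  intro i hi
  have hN : 2 ≤ N := by
    by_contra hlt
    have h1 : (k : ℝ) ^ ((N : ℤ) - 2) < 1 :=
      zpow_lt_one_of_neg₀ (by exact_mod_cast (by omega : 1 < k)) (by omega)
    have h2 : (1 : ℝ) ≤ n := by exact_mod_cast hn
    linarith
  have hnk : n ≤ k ^ (N - 2) := by
    have e : (N : ℤ) - 2 = ((N - 2 : ℕ) : ℤ) := by omega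
    rw [e, zpow_natCast] at hnN
    exact_mod_cast hnN
  rw [dseq_eq_card k q hk hq m hm] at hs
  obtain ⟨p, hp, P, hP, hpP, hNp⟩ := exists_two_hits _ N hN hs
  have hpH := (Finset.mem_filter.mp hp).2
  have hPH := (Finset.mem_filter.mp hP).2
  have hdig : m / k ^ p % k ≠ 0 := by
    have := hpH 0 (by omega)
    rw [add_zero] at this
    omega
  have hlow := pow_le_mod hpP hdig
  have hpow : k ^ (N - 2) ≤ k ^ p := Nat.pow_le_pow_right (by omega) hNp
  have hH := hit_sub (i := i) hk hPH (by omega)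
  have hlen := hH.add_le hk hq
  have hpos : 0 < m - i := by
    by_contra h0
    have h0' : m - i = 0 := by omega
    rw [h0', Nat.digits_zero, List.length_nil] at hlen
    omega
  rw [dseq_eq_card k q hk hq _ hpos, Finset.card_pos]
  exact ⟨P, Finset.mem_filter.mpr ⟨Finset.mem_range.mpr (by omega), hH⟩⟩
end
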